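/- Let I = (L(u,v)) be a lexsegment edge ideal in S = K[x_1,…,x_n] and I* its Alexander dual. Then the arithmetical rank of I* equals the projective dimension of S/I* over S, i.e., ara(I*) = projdim_S(S/I*). -/

import Mathlib

/-!
Let `G` be the graph on the vertices `1, …, n` with edge ideal `I`. Then `I*` is its cover ideal, the
intersection of the primes `(X a, X b)` over the edges. Write `u = x_i x_j`, `v = x_k x_l`. Both
invariants are equal to `3` if `i < k`, `k + 2 ≤ j` and `l < n`, and to `2` otherwise.

Upper bounds. Adding a vertex `x` with neighbourhood `N` to a vertex set `V` gives
`J(V ∪ {x}) = X_x J(V) + (∏_N X) J(V \ N)` (`mem_coverIdeal_insert`), with syzygy module `J(V \ N)`.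
This controls the projective dimension (`hasPDLT_coverIdeal_insert`) and the number of generators up to
radical (`radGen_insert`, `radGen_insert_of_dvd`, `radGen_insert_three`). If `N` meets every edge of
`V`, then `J(V \ N)` is the unit ideal, and two generators up to radical and projective dimension one of
the ideal are preserved; in the second case above, the whole graph is built from an independent set by
such steps (`exists_niceWith_univ`). In the first case this holds for the graph without the vertex `i`,
and adding `i` costs one more generator and one more syzygy (`three_generators_of_gap`).

Lower bounds. Let `b` be any ideal with the same radical as `I*`, so that `(I*)^N ≤ b ≤ I*`. Along the
prime `(X_a, X_b)` of an edge, `S/b` has grade zero, so `S/b` has projective dimension at least two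
(`not_hasPDLT_two`). In the first case the edges `{i, n}` and `{k, k + 1}` form an induced pair of
disjoint edges, and along the prime generated by their four variables the grade of `S/b` is at most one
by a connectedness argument (`not_D2`), so `S/b` has projective dimension at least three
(`not_hasPDLT_three`). Taking `b = I*` bounds the projective dimension. Taking `b` generated by at most
one, respectively two, elements contradicts the fact that an ideal with so few generators in a factorial
domain has quotient of projective dimension at most one, respectively two; this bounds the arithmetical
rank (`ara_eq_projDim_of`). The passage from grade to projective dimension is `ext_eq_zero_of_hasPDLT`.
-/

open MvPolynomial

/-- The variable `x_i` (1-based indexing) of `K[x_1,…,x_n]`. -/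
noncomputable def xv (K : Type) [Field K] (n i : ℕ) : MvPolynomial (Fin n) K :=
  if h : i - 1 < n then MvPolynomial.X ⟨i - 1, h⟩ else 0

/-- `lexGE p q` : for sorted index pairs, the squarefree degree-2 monomial
`x_{p.1} x_{p.2}` is greater than or equal to `x_{q.1} x_{q.2}` in the
lexicographic order induced by `x_1 > x_2 > ⋯ > x_n`. -/
def lexGE (p q : ℕ × ℕ) : Prop := p.1 < q.1 ∨ (p.1 = q.1 ∧ p.2 ≤ q.2)

/-- Strict lexicographic comparison of sorted index pairs. -/
def lexGT (p q : ℕ × ℕ) : Prop := p.1 < q.1 ∨ (p.1 = q.1 ∧ p.2 < q.2)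

/-- Sorted index pairs in range `1,…,n`; these correspond exactly to the
squarefree monomials of degree 2 of `K[x_1,…,x_n]`. -/
def validPair (n : ℕ) (p : ℕ × ℕ) : Prop := 1 ≤ p.1 ∧ p.1 < p.2 ∧ p.2 ≤ n

/-- The lexsegment set `L(u,v)`, as a set of sorted index pairs. -/
def lexSegSet (n : ℕ) (u v : ℕ × ℕ) : Set (ℕ × ℕ) :=
  {w | validPair n w ∧ lexGE u w ∧ lexGE w v}

/-- The lexsegment edge ideal `I = (L(u,v)) ⊆ K[x_1,…,x_n]`. -/
noncomputable def lexSegIdeal (K : Type) [Field K] (n : ℕ) (u v : ℕ × ℕ) :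
    Ideal (MvPolynomial (Fin n) K) :=
  Ideal.span ((fun w : ℕ × ℕ => xv K n w.1 * xv K n w.2) '' lexSegSet n u v)

/-- The Alexander dual of the lexsegment edge ideal `(L(u,v))`: the intersection,
over the (minimal) monomial generators `x_p x_q` with `(p,q) ∈ L(u,v)`, of the
prime ideals `(x_p, x_q)`. -/
noncomputable def lexSegAlexDual (K : Type) [Field K] (n : ℕ) (u v : ℕ × ℕ) :
    Ideal (MvPolynomial (Fin n) K) :=
  ⨅ w ∈ lexSegSet n u v, Ideal.span {xv K n w.1, xv K n w.2}

/-- The arithmetical rank of an ideal: the least `r` such that some `r` elements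
of `J` generate an ideal with the same radical as `J`. -/
noncomputable def ara {R : Type} [CommRing R] (J : Ideal R) : ℕ :=
  sInf {r : ℕ | ∃ f : Fin r → R, (∀ t, f t ∈ J) ∧
    (Ideal.span (Set.range f)).radical = J.radical}

/-- The projective dimension of a module `M`: the least `d` admitting a projective
resolution vanishing in homological degrees `> d`. -/
noncomputable def projDim {R : Type} [CommRing R] (M : ModuleCat R) : ℕ :=
  sInf {d : ℕ | ∃ P : CategoryTheory.ProjectiveResolution M,
    ∀ i : ℕ, d < i → CategoryTheory.Limits.IsZero (P.complex.X i)}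

/-- The depth of `S/I` with respect to the graded maximal ideal `(x_1,…,x_n)`:
the longest length of a regular sequence on `S/I` consisting of elements of
`(x_1,…,x_n)`. -/
noncomputable def smDepth (K : Type) [Field K] (n : ℕ)
    (I : Ideal (MvPolynomial (Fin n) K)) : ℕ :=
  sSup {r : ℕ | ∃ rs : List (MvPolynomial (Fin n) K), rs.length = r ∧
    (∀ a ∈ rs, a ∈ Ideal.span
      (Set.range (MvPolynomial.X : Fin n → MvPolynomial (Fin n) K))) ∧
    RingTheory.Sequence.IsRegular (MvPolynomial (Fin n) K ⧸ I) rs}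

/-- The height of an ideal: the infimum of the heights of the primes containing it. -/
noncomputable def idealHeight {R : Type} [CommRing R] (I : Ideal R) : ℕ∞ :=
  ⨅ p ∈ {p : PrimeSpectrum R | I ≤ p.asIdeal}, Order.height p

/-- `m` is a monomial of `K[x_1,…,x_n]`. -/
def IsMonomial {K : Type} [Field K] {n : ℕ} (m : MvPolynomial (Fin n) K) : Prop :=
  ∃ s : Fin n →₀ ℕ, m = MvPolynomial.monomial s 1

/-- `m` is a squarefree monomial of `K[x_1,…,x_n]`. -/
def IsSqFreeMonomial {K : Type} [Field K] {n : ℕ} (m : MvPolynomial (Fin n) K) : Prop :=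
  ∃ t : Finset (Fin n), m = t.prod (fun i => MvPolynomial.X i)

/-- `m` is a minimal monomial generator of the monomial ideal `I`: a monomial of `I`
divisible by no monomial of `I` other than itself. -/
def IsMinimalMonomialGen {K : Type} [Field K] {n : ℕ}
    (I : Ideal (MvPolynomial (Fin n) K)) (m : MvPolynomial (Fin n) K) : Prop :=
  IsMonomial m ∧ m ∈ I ∧
    ∀ m', IsMonomial m' → m' ∈ I → m' ∣ m → m' = m

/-! ### Projective dimension through resolutions and through Ext -/

section Homological
open CategoryTheory CategoryTheory.Abelian CategoryTheory.Limits

variable {R : Type} [CommRing R]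

/-- A projective resolution vanishing above degree `d` kills `Ext` above degree `d`. -/
lemma hasPDLT_of_resolution {M : ModuleCat.{0} R} (P : ProjectiveResolution M) (d : ℕ)
    (hP : ∀ i : ℕ, d < i → IsZero (P.complex.X i)) : HasProjectiveDimensionLT M (d + 1) := by
  rw [hasProjectiveDimensionLT_iff.{0}]
  intro i hi Y e
  obtain ⟨f, hf, rfl⟩ := P.extMk_surjective e (i + 1) rfl
  have : f = 0 := (hP i hi).eq_of_src _ _
  subst this
  simp

/-- Splicing: for a short exact sequence with projective middle term, a projective resolution of
the kernel, shifted by one, extends to a projective resolution of the cokernel. -/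
lemma exists_splice {S : ShortComplex (ModuleCat.{0} R)} (hS : S.ShortExact)
    (hF : Projective S.X₂) (P : ProjectiveResolution S.X₁) :
    ∃ Q : ProjectiveResolution S.X₃, ∀ i, Q.complex.X (i + 1) = P.complex.X i := by
  have := hS.mono_f
  have := hS.epi_g
  -- the augmentation is retyped so that its target is syntactically `S.X₁`
  obtain ⟨ε, hε, hεepi, hεex⟩ : ∃ (ε : P.complex.X 0 ⟶ S.X₁) (h : P.complex.d 1 0 ≫ ε = 0),
      Epi ε ∧ (ShortComplex.mk _ _ h).Exact :=
    ⟨P.π.f 0, P.complex_d_comp_π_f_zero, inferInstanceAs (Epi (P.π.f 0)), P.exact₀⟩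
  have h0 : P.complex.d 1 0 ≫ (ε ≫ S.f) = 0 := by rw [← Category.assoc, hε, zero_comp]
  have hz : (ε ≫ S.f) ≫ S.g = 0 := by rw [Category.assoc, S.zero, comp_zero]
  have hex0 : (ShortComplex.mk (ε ≫ S.f) S.g hz).Exact := by
    let φ : ShortComplex.mk (ε ≫ S.f) S.g hz ⟶ S :=
      { τ₁ := ε, τ₂ := 𝟙 _, τ₃ := 𝟙 _ }
    have : Epi φ.τ₁ := hεepi
    have : IsIso φ.τ₂ := inferInstanceAs (IsIso (𝟙 S.X₂))
    have : Mono φ.τ₃ := inferInstanceAs (Mono (𝟙 S.X₃))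
    exact (ShortComplex.exact_iff_of_epi_of_isIso_of_mono φ).2 hS.exact
  have hex1 : (ShortComplex.mk (P.complex.d 1 0) (ε ≫ S.f) h0).Exact := by
    let φ : ShortComplex.mk _ _ hε ⟶ ShortComplex.mk (P.complex.d 1 0) (ε ≫ S.f) h0 :=
      { τ₁ := 𝟙 _, τ₂ := 𝟙 _, τ₃ := S.f }
    have : Epi φ.τ₁ := inferInstanceAs (Epi (𝟙 (P.complex.X 1)))
    have : IsIso φ.τ₂ := inferInstanceAs (IsIso (𝟙 (P.complex.X 0)))
    have : Mono φ.τ₃ := hS.mono_f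
    exact (ShortComplex.exact_iff_of_epi_of_isIso_of_mono φ).1 hεex
  obtain ⟨C, hC⟩ : ∃ C : ChainComplex (ModuleCat.{0} R) ℕ,
    C = P.complex.augment (ε ≫ S.f) h0 := ⟨_, rfl⟩
  have hproj : ∀ n, Projective (C.X n) := fun n => by
    subst hC
    cases n
    · exact hF
    · exact P.projective _
  have hexs : ∀ n, C.ExactAt (n + 1) := by
    intro n
    rw [HomologicalComplex.exactAt_iff' _ (n + 1 + 1) (n + 1) n (by simp) (by simp)]
    subst hC
    cases n with
    | zero => exact hex1
    | succ n => exact P.exact_succ n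
  obtain ⟨η, hη0, hηepi, hηex⟩ : ∃ (η : C.X 0 ⟶ S.X₃) (h : C.d 1 0 ≫ η = 0),
      Epi η ∧ (ShortComplex.mk _ _ h).Exact := by
    subst hC
    exact ⟨S.g, hz, hS.epi_g, hex0⟩
  refine ⟨{ complex := C, projective := hproj,
            π := (ChainComplex.toSingle₀Equiv _ _).symm ⟨η, hη0⟩,
            quasiIso := ⟨fun n => ?_⟩ }, fun i => by subst hC; rfl⟩
  cases n
  · rw [ChainComplex.quasiIsoAt₀_iff, ShortComplex.quasiIso_iff_of_zeros']
    · refine (ShortComplex.exact_and_epi_g_iff_of_iso ?_).2 ⟨hηex, hηepi⟩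
      exact ShortComplex.isoMk (Iso.refl _) (Iso.refl _) (Iso.refl _)
          ((Category.id_comp (C.d 1 0)).trans (Category.comp_id (C.d 1 0)).symm)
          ((Category.id_comp η).trans (Category.comp_id η).symm)
    · exact C.shape 0 0 (by simp)
    all_goals rfl
  · rw [quasiIsoAt_iff_exactAt']
    · apply hexs
    · apply ChainComplex.exactAt_succ_single_obj

/-- Converse of `hasPDLT_of_resolution`: by dimension shifting along `Projective.π M`, a module of
projective dimension at most `d` has a projective resolution vanishing above degree `d`. -/
lemma exists_resolution (d : ℕ) (M : ModuleCat.{0} R) (h : HasProjectiveDimensionLT M (d + 1)) :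
    ∃ P : ProjectiveResolution M, ∀ i : ℕ, d < i → IsZero (P.complex.X i) := by
  induction d generalizing M with
  | zero =>
    have : Projective M := projective_iff_hasProjectiveDimensionLT_one.2 h
    refine ⟨ProjectiveResolution.self M, fun i hi => ?_⟩
    apply HomologicalComplex.isZero_single_obj_X
    simp; omega
  | succ d ih =>
    let S : ShortComplex (ModuleCat.{0} R) :=
      ShortComplex.mk (kernel.ι (Projective.π M)) (Projective.π M) (by simp)
    have hS : S.ShortExact := { exact := ShortComplex.exact_kernel _ }
    have hF : Projective S.X₂ := Projective.projective_over M
    obtain ⟨P, hP⟩ := ih S.X₁ ((hS.hasProjectiveDimensionLT_X₃_iff d hF).1 h)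
    obtain ⟨Q, hQ⟩ := exists_splice hS hF P
    refine ⟨Q, fun i hi => ?_⟩
    obtain ⟨i, rfl⟩ : ∃ k, i = k + 1 := ⟨i - 1, by omega⟩
    rw [hQ]
    exact hP i (by omega)

/-- Bridge between `projDim`, which speaks of resolutions, and `HasProjectiveDimensionLT`, which
speaks of the vanishing of `Ext`. -/
lemma projDim_eq_of_hasPDLT (M : ModuleCat.{0} R) (d : ℕ) (h : HasProjectiveDimensionLT M (d + 1))
    (h' : ¬ HasProjectiveDimensionLT M d) : projDim M = d := by
  apply le_antisymm
  · exact Nat.sInf_le (exists_resolution d M h)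
  · refine le_csInf ⟨d, exists_resolution d M h⟩ ?_
    rintro e ⟨P, hP⟩
    by_contra hlt
    have := hasPDLT_of_resolution P e hP
    exact h' (hasProjectiveDimensionLT_of_ge M (e + 1) d (by omega))

end Homological

/-! ### Grade and projective dimension -/

section Depth
open CategoryTheory CategoryTheory.Abelian RingTheory.Sequence

variable {R : Type} [CommRing R]

/-- Tensoring with a flat module preserves weakly regular sequences. -/
lemma isWeaklyRegular_tensor (F : Type) [AddCommGroup F] [Module R F] [Module.Flat R F]
    (rs : List R) : ∀ (N : Type) [AddCommGroup N] [Module R N], IsWeaklyRegular N rs →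
      IsWeaklyRegular (TensorProduct R F N) rs := by
  induction rs with
  | nil => intro N _ _ _; exact IsWeaklyRegular.nil R _
  | cons x rs ih =>
    intro N _ _ h
    rw [isWeaklyRegular_cons_iff] at h ⊢
    refine ⟨?_, ?_⟩
    · have h1 : Function.Injective (LinearMap.lsmul R N x) := h.1
      have h2 := Module.Flat.lTensor_preserves_injective_linearMap (M := F) _ h1
      intro a b hab
      apply h2
      have key : LinearMap.lTensor F (LinearMap.lsmul R N x) =
          LinearMap.lsmul R (TensorProduct R F N) x := by
        ext f n
        simp
      rw [key]
      exact hab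
    · exact ((QuotSMulTop.tensorQuotSMulTopEquivQuotSMulTop x F N).isWeaklyRegular_congr rs).1 (ih _ h.2)

lemma isWeaklyRegular_of_flat (F : Type) [AddCommGroup F] [Module R F] [Module.Flat R F]
    {rs : List R} (h : IsWeaklyRegular R rs) : IsWeaklyRegular F rs :=
  ((TensorProduct.rid R F).isWeaklyRegular_congr rs).1 (isWeaklyRegular_tensor F rs R h)

/-- If the weakly `M`-regular sequence `rs` annihilates `N`, then `Ext N M` vanishes below degree
`rs.length`: multiplication by the first element is zero on `Ext N M i`, which therefore is a
quotient of `Ext N (M/xM) (i - 1)`. -/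
lemma ext_eq_zero_of_isWeaklyRegular {N : ModuleCat.{0} R} (rs : List R)
    (hN : ∀ x ∈ rs, x • 𝟙 N = 0) : ∀ (M : ModuleCat.{0} R), IsWeaklyRegular M rs →
      ∀ i < rs.length, ∀ e : Ext N M i, e = 0 := by
  induction rs with
  | nil => intro M _ i hi; simp at hi
  | cons x rs ih =>
    intro M hM i hi e
    rw [isWeaklyRegular_cons_iff] at hM
    have hx : e.comp (Ext.mk₀ (M.smulShortComplex x).f) (add_zero i) = 0 := by
      rw [ModuleCat.smulShortComplex_f_eq_smul_id]
      have h1 : (Ext.mk₀ (x • 𝟙 N)).comp e (zero_add i) = 0 := by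
        rw [hN x (by simp)]; simp
      rw [Ext.mk₀_smul, Ext.smul_comp, Ext.mk₀_id_comp] at h1
      refine Eq.trans (Ext.smul_eq_comp_mk₀ e x).symm h1
    have hS := hM.1.smulShortComplex_shortExact
    cases i with
    | zero =>
      have := hS.mono_f
      apply Ext.postcomp_mk₀_injective_of_mono N (M.smulShortComplex x).f
      exact Eq.trans hx (map_zero _).symm
    | succ i =>
      obtain ⟨y, rfl⟩ := Ext.covariant_sequence_exact₁ N hS e hx (n₀ := i) rfl
      have : y = 0 := ih (fun z hz => hN z (by simp [hz])) (ModuleCat.of R (QuotSMulTop x M)) hM.2 i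
        (by simpa using hi) y
      rw [this]; exact Ext.zero_comp N i hS.extClass (i + 1) rfl

/-- Each unit of projective dimension of `M` costs one degree in the vanishing range of `Ext N M`:
dimension shifting from the projective case, where an `R`-regular sequence is `M`-regular. This is
the half of the Auslander–Buchsbaum formula needed below. -/
lemma ext_eq_zero_of_hasPDLT {N : ModuleCat.{0} R} (rs : List R) (hN : ∀ x ∈ rs, x • 𝟙 N = 0)
    (hrs : IsWeaklyRegular R rs) (d : ℕ) : ∀ (M : ModuleCat.{0} R),
      HasProjectiveDimensionLT M (d + 1) → ∀ i, i + d < rs.length → ∀ e : Ext N M i, e = 0 := by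
  induction d with
  | zero =>
    intro M h i hi
    have h1 : Projective M := projective_iff_hasProjectiveDimensionLT_one.2 h
    have h2 : Module.Projective R M := (IsProjective.iff_projective _).2 h1
    exact ext_eq_zero_of_isWeaklyRegular rs hN M (isWeaklyRegular_of_flat M hrs) i hi
  | succ d ih =>
    intro M h i hi e
    have hS := M.shortExact_projectiveShortComplex
    have hF : Projective M.projectiveShortComplex.X₂ := inferInstance
    have hK := (hS.hasProjectiveDimensionLT_X₃_iff d hF).1 h
    have h0 : e.comp hS.extClass rfl = 0 := ih _ hK (i + 1) (by omega) _
    obtain ⟨y, rfl⟩ := Ext.covariant_sequence_exact₃ N hS e rfl h0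
    have : y = 0 := by
      have h2 : Module.Projective R M.projectiveShortComplex.X₂ := 
        (IsProjective.iff_projective _).2 hF
      exact ext_eq_zero_of_isWeaklyRegular rs hN _ (isWeaklyRegular_of_flat _ hrs) i (by omega) y
    rw [this]; simp

/-- The ideal `I` has grade at least one on `M`, in elementary terms: no nonzero element of `M` is
annihilated by `I`, that is, `Hom(R/I, M) = 0`. -/
def D1 (I : Ideal R) (M : Type) [AddCommGroup M] [Module R M] : Prop :=
  ∀ m : M, (∀ a ∈ I, a • m = 0) → m = 0

/-- The ideal `I` has grade at least two on `M`, in elementary terms: `Hom(R/I, M) = 0` and every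
map `I → M` is multiplication by an element of `M`, that is, `Ext¹(R/I, M) = 0`. -/
def D2 (I : Ideal R) (M : Type) [AddCommGroup M] [Module R M] : Prop :=
  D1 I M ∧ ∀ φ : I →ₗ[R] M, ∃ m : M, ∀ a : I, φ a = (a : R) • m

lemma smul_id_quotient (I : Ideal R) {x : R} (hx : x ∈ I) :
    x • 𝟙 (ModuleCat.of R (R ⧸ I)) = 0 := by
  refine ModuleCat.hom_ext (LinearMap.ext fun a => ?_)
  obtain ⟨a, rfl⟩ := Ideal.Quotient.mk_surjective a
  change Ideal.Quotient.mk I (x * a) = 0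
  exact Ideal.Quotient.eq_zero_iff_mem.2 (I.mul_mem_right a hx)

lemma D1_of_ext (I : Ideal R) (M : ModuleCat.{0} R)
    (h : ∀ e : Ext (ModuleCat.of R (R ⧸ I)) M 0, e = 0) : D1 I M := by
  intro m hm
  let f : (R ⧸ I) →ₗ[R] M := Submodule.liftQ I (LinearMap.toSpanSingleton R M m) (fun a ha => by
    rw [LinearMap.mem_ker, LinearMap.toSpanSingleton_apply]; exact hm a ha)
  have h1 : Ext.mk₀ (ModuleCat.ofHom f : ModuleCat.of R (R ⧸ I) ⟶ M) = 0 := h _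
  have h2 : (ModuleCat.ofHom f : ModuleCat.of R (R ⧸ I) ⟶ M) = 0 := by
    apply Ext.homEquiv₀.symm.injective
    simpa using! h1
  have h3 : f (Submodule.Quotient.mk 1) = 0 := by
    have := congrArg (fun g => g.hom (Submodule.Quotient.mk 1)) h2
    exact this
  rw [← h3]; exact (one_smul R m).symm

/-- The long exact sequence of `0 → I → R → R/I → 0` extends a map `I → M` to `R → M` once
`Ext¹(R/I, M) = 0`. -/
lemma D2_of_ext (I : Ideal R) (M : ModuleCat.{0} R)
    (h : ∀ i < 2, ∀ e : Ext (ModuleCat.of R (R ⧸ I)) M i, e = 0) : D2 I M := by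
  refine ⟨D1_of_ext I M (h 0 (by norm_num)), fun φ => ?_⟩
  let S : ShortComplex (ModuleCat.{0} R) :=
    ModuleCat.shortComplexOfCompEqZero (Submodule.subtype I) (Submodule.mkQ I) 
      (by ext x; exact Ideal.Quotient.eq_zero_iff_mem.2 x.2)
  have hS : S.ShortExact := ModuleCat.shortComplex_shortExact S
    (LinearMap.exact_subtype_mkQ I) (Submodule.subtype_injective I) (Submodule.mkQ_surjective I)
  obtain ⟨y, hy⟩ := Ext.contravariant_sequence_exact₁ hS M (Ext.mk₀ (ModuleCat.ofHom φ : S.X₁ ⟶ M))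
    (n₁ := 1) rfl (h 1 (by norm_num) _)
  obtain ⟨g, rfl⟩ := Ext.homEquiv₀.symm.surjective y
  have h1 : S.f ≫ g = ModuleCat.ofHom φ := by
    apply Ext.homEquiv₀.symm.injective
    simpa using! hy
  refine ⟨g.hom (1 : R), fun a => ?_⟩
  have h2 : g.hom (a : R) = φ a := congrArg (fun k => k.hom a) h1
  rw [← h2, ← map_smul]
  simp

lemma D2_of_hasPDLT (rs : List R) (hrs : IsWeaklyRegular R rs) (M : ModuleCat.{0} R) (d : ℕ)
    (hM : HasProjectiveDimensionLT M (d + 1)) (hd : d + 2 ≤ rs.length) : D2 (Ideal.ofList rs) M :=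
  D2_of_ext _ _ fun _ hi => ext_eq_zero_of_hasPDLT rs
    (fun _ hx => smul_id_quotient _ (Ideal.subset_span hx)) hrs d M hM _ (by omega)

lemma D1_of_hasPDLT (rs : List R) (hrs : IsWeaklyRegular R rs) (M : ModuleCat.{0} R) (d : ℕ)
    (hM : HasProjectiveDimensionLT M (d + 1)) (hd : d + 1 ≤ rs.length) : D1 (Ideal.ofList rs) M :=
  D1_of_ext _ _ (ext_eq_zero_of_hasPDLT rs
    (fun _ hx => smul_id_quotient _ (Ideal.subset_span hx)) hrs d M hM _ (by omega))

section Grade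
variable {M : Type} [AddCommGroup M] [Module R M]

lemma D1.mono {I J : Ideal R} (h : D1 I M) (hIJ : I ≤ J) : D1 J M :=
  fun m hm => h m fun a ha => hm a (hIJ ha)

lemma D1.mul {I J : Ideal R} (hI : D1 I M) (hJ : D1 J M) : D1 (I * J) M := by
  intro m hm
  refine hJ m fun b hb => hI _ fun a ha => ?_
  rw [← mul_smul]
  exact hm _ (Ideal.mul_mem_mul ha hb)

lemma D1.top : D1 (⊤ : Ideal R) M := fun m hm => by simpa using hm 1 trivial

lemma D1.pow {I : Ideal R} (h : D1 I M) (N : ℕ) : D1 (I ^ N) M := by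
  induction N with
  | zero => simpa using D1.top
  | succ N ih => rw [pow_succ]; exact ih.mul h

lemma D2.mono {I J : Ideal R} (h : D2 I M) (hIJ : I ≤ J) : D2 J M := by
  refine ⟨h.1.mono hIJ, fun φ => ?_⟩
  obtain ⟨m, hm⟩ := h.2 (φ.comp (Submodule.inclusion hIJ))
  refine ⟨m, fun q => ?_⟩
  rw [← sub_eq_zero]
  refine h.1 _ fun a ha => ?_
  have h1 : φ ⟨a, hIJ ha⟩ = a • m := hm ⟨a, ha⟩
  have h2 : a • q = (q : R) • (⟨a, hIJ ha⟩ : J) := by ext; simp [mul_comm]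
  rw [smul_sub, ← map_smul, h2, map_smul, h1, smul_comm, sub_self]

lemma D2.top : D2 (⊤ : Ideal R) M :=
  ⟨D1.top, fun φ => ⟨φ ⟨1, trivial⟩, fun a => by rw [← map_smul]; congr 1; ext; simp⟩⟩

lemma D2.mul {I J : Ideal R} (hI : D2 I M) (hJ : D2 J M) : D2 (I * J) M := by
  refine ⟨hI.1.mul hJ.1, fun φ => ?_⟩
  -- for fixed `x ∈ J`, the map `a ↦ φ (a * x)` on `I` is multiplication by a unique `z x`
  have hz : ∀ x : J, ∃ z : M, ∀ a : I,
      φ ⟨a * x, Ideal.mul_mem_mul a.2 x.2⟩ = (a : R) • z := by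
    intro x
    let g : I →ₗ[R] (I * J : Ideal R) :=
      { toFun a := ⟨a * x, Ideal.mul_mem_mul a.2 x.2⟩
        map_add' a b := by ext; simp [add_mul]
        map_smul' r a := by ext; simp [mul_assoc] }
    exact hI.2 (φ.comp g)
  choose z hz using hz
  have huniq : ∀ m m' : M, (∀ a : I, (a : R) • m = (a : R) • m') → m = m' := by
    intro m m' h
    rw [← sub_eq_zero]
    exact hI.1 _ fun a ha => by rw [smul_sub, h ⟨a, ha⟩, sub_self]
  let ζ : J →ₗ[R] M :=
    { toFun := z
      map_add' x y := huniq _ _ fun a => by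
        rw [← hz, smul_add, ← hz, ← hz, ← map_add]
        congr 1; ext; simp [mul_add]
      map_smul' r x := huniq _ _ fun a => by
        rw [← hz, RingHom.id_apply, smul_comm, ← hz, ← map_smul]
        congr 1; ext; simp [mul_left_comm] }
  obtain ⟨m, hm⟩ := hJ.2 ζ
  refine ⟨m, fun q => ?_⟩
  obtain ⟨q, hq⟩ := q
  induction hq using Submodule.mul_induction_on' with
  | mem_mul_mem a ha b hb =>
    have h1 : z ⟨b, hb⟩ = b • m := hm ⟨b, hb⟩
    exact (hz ⟨b, hb⟩ ⟨a, ha⟩).trans (by rw [h1, ← mul_smul])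
  | add x hx y hy h1 h2 =>
    have : φ ⟨x + y, Ideal.add_mem _ hx hy⟩ = φ ⟨x, hx⟩ + φ ⟨y, hy⟩ := by
      rw [← map_add]; rfl
    rw [this, h1, h2, add_smul]

lemma D2.pow {I : Ideal R} (h : D2 I M) (N : ℕ) : D2 (I ^ N) M := by
  induction N with
  | zero => simpa using D2.top
  | succ N ih => rw [pow_succ]; exact ih.mul h

end Grade

lemma quot_smul_eq_zero {b : Ideal R} {a z : R} : a • (Ideal.Quotient.mk b z) = 0 ↔ a * z ∈ b := by
  rw [← Ideal.Quotient.eq_zero_iff_mem]; rfl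

/-- If `w ^ N` is outside `P ⊇ b` but multiplies `P ^ N` into `b`, then `R/b` has
grade zero along `P`: the class of `w ^ N` is killed by `P ^ N`. -/
lemma not_D1 {P b : Ideal R} {w : R} {N : ℕ} (hb : b ≤ P) (hw : w ^ N ∉ P)
    (h : ∀ a ∈ P ^ N, w ^ N * a ∈ b) : ¬ D1 P (R ⧸ b) := by
  intro hD
  have := (hD.pow N) (Ideal.Quotient.mk b (w ^ N)) fun a ha => by
    rw [quot_smul_eq_zero, mul_comm]; exact h a ha
  rw [Ideal.Quotient.eq_zero_iff_mem] at this
  exact hw (hb this)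

/-- A Hartshorne-type connectedness argument. Away from `w`, the zero set of `b` is the union of
those of `P₁` and `P₂`, which meet only along `P₁ ⊔ P₂`. If the grade of `P₁ ⊔ P₂` on `R/b` were two,
so would be the grade of `P₁ ^ N ⊔ P₂ ^ N`, and the map which is multiplication by `w ^ N` on
`P₁ ^ N` and zero on `P₂ ^ N` would be multiplication by some `z`; then `z ∈ P₁` and
`w ^ N - z ∈ P₂`, forcing `w ^ N ∈ P₁ ⊔ P₂`. -/
lemma not_D2 {P₁ P₂ b : Ideal R} [P₁.IsPrime] [P₂.IsPrime] {w : R} {N : ℕ} (hb₁ : b ≤ P₁)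
    (hb₂ : b ≤ P₂) (hw : w ^ N ∉ P₁ ⊔ P₂) {a c : R} (ha : a ∈ P₁) (ha' : a ∉ P₂) (hc : c ∈ P₂)
    (hc' : c ∉ P₁) (h : ∀ x ∈ P₁ ^ N, ∀ y ∈ P₂ ^ N, w ^ N * (x * y) ∈ b) :
    ¬ D2 (P₁ ⊔ P₂) (R ⧸ b) := by
  intro hD
  have hQ : D2 (P₁ ^ N ⊔ P₂ ^ N) (R ⧸ b) := (hD.pow (N + N)).mono Ideal.sup_pow_add_le_pow_sup_pow
  have hin : ∀ x ∈ P₁ ^ N, x ∈ P₂ ^ N → w ^ N * x ∈ b := by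
    intro x hx hx'
    rw [← Ideal.Quotient.eq_zero_iff_mem]
    refine hQ.1 _ fun q hq => ?_
    obtain ⟨y, hy, y', hy', rfl⟩ := Submodule.mem_sup.1 hq
    rw [quot_smul_eq_zero]
    have e : (y + y') * (w ^ N * x) = w ^ N * (y * x) + w ^ N * (x * y') := by ring
    rw [e]
    exact b.add_mem (h y hy x hx') (h x hx y' hy')
  have hdec : ∀ q : (P₁ ^ N ⊔ P₂ ^ N : Ideal R), ∃ x ∈ P₁ ^ N, (q : R) - x ∈ P₂ ^ N := by
    intro q
    obtain ⟨y, hy, y', hy', e⟩ := Submodule.mem_sup.1 q.2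
    exact ⟨y, hy, by rw [← e]; simpa using hy'⟩
  choose p hp hp' using hdec
  -- the map `φ` below does not depend on the chosen decomposition of `q`
  have hwd : ∀ (q : (P₁ ^ N ⊔ P₂ ^ N : Ideal R)) (x : R), x ∈ P₁ ^ N → (q : R) - x ∈ P₂ ^ N →
      Ideal.Quotient.mk b (w ^ N * p q) = Ideal.Quotient.mk b (w ^ N * x) := by
    intro q x hx hx'
    rw [Ideal.Quotient.eq, ← mul_sub]
    refine hin _ (sub_mem (hp q) hx) ?_
    have := sub_mem hx' (hp' q)
    simpa using this
  -- multiplication by `w ^ N` on the first summand, zero on the second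
  let φ : (P₁ ^ N ⊔ P₂ ^ N : Ideal R) →ₗ[R] (R ⧸ b) :=
    { toFun q := Ideal.Quotient.mk b (w ^ N * p q)
      map_add' q q' := by
        rw [hwd (q + q') (p q + p q') (add_mem (hp q) (hp q')), mul_add, map_add]
        have := add_mem (hp' q) (hp' q')
        convert this using 1
        push_cast; ring
      map_smul' r q := by
        rw [hwd (r • q) (r * p q) (Ideal.mul_mem_left _ _ (hp q)), RingHom.id_apply, mul_left_comm]
        · rfl
        · have := Ideal.mul_mem_left _ r (hp' q)
          convert this using 1
          simp [mul_sub] }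
  obtain ⟨m, hm⟩ := hQ.2 φ
  obtain ⟨z, rfl⟩ := Ideal.Quotient.mk_surjective m
  have hA : a ^ N ∈ P₁ ^ N := Ideal.pow_mem_pow ha N
  have hC : c ^ N ∈ P₂ ^ N := Ideal.pow_mem_pow hc N
  have h1 := hm ⟨a ^ N, Ideal.mem_sup_left hA⟩
  have h2 := hm ⟨c ^ N, Ideal.mem_sup_right hC⟩
  have h1' : w ^ N * a ^ N - a ^ N * z ∈ b := by
    rw [← Ideal.Quotient.eq]
    refine Eq.trans ?_ h1
    exact (hwd ⟨a ^ N, _⟩ (a ^ N) hA (by simp)).symm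
  have h2' : w ^ N * 0 - c ^ N * z ∈ b := by
    rw [← Ideal.Quotient.eq]
    refine Eq.trans ?_ h2
    exact (hwd ⟨c ^ N, _⟩ 0 (zero_mem _) (by simpa using hC)).symm
  have hz : z ∈ P₁ := by
    have : c ^ N * z ∈ P₁ := by simpa using hb₁ h2'
    exact (Ideal.IsPrime.mem_or_mem ‹_› this).resolve_left
      fun h => hc' (Ideal.IsPrime.mem_of_pow_mem ‹_› _ h)
  have hz' : w ^ N - z ∈ P₂ := by
    have : a ^ N * (w ^ N - z) ∈ P₂ := by convert hb₂ h1' using 1; ring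
    exact (Ideal.IsPrime.mem_or_mem ‹_› this).resolve_left
      fun h => ha' (Ideal.IsPrime.mem_of_pow_mem ‹_› _ h)
  apply hw
  have h3 : z + (w ^ N - z) ∈ P₁ ⊔ P₂ :=
    Ideal.add_mem _ (Ideal.mem_sup_left hz) (Ideal.mem_sup_right hz')
  rwa [add_sub_cancel] at h3

end Depth

/-! ### Projective dimension of ideals from syzygies -/

section Syzygy
open CategoryTheory CategoryTheory.Limits

variable {R : Type} [CommRing R]

lemma hasPDLT_quotient {I : Ideal R} {n : ℕ} (h : HasProjectiveDimensionLT (ModuleCat.of R I) (n + 1)) :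
    HasProjectiveDimensionLT (ModuleCat.of R (R ⧸ I)) (n + 2) := by
  let S : ShortComplex (ModuleCat.{0} R) :=
    ModuleCat.shortComplexOfCompEqZero (Submodule.subtype I) (Submodule.mkQ I)
      (by ext x; exact Ideal.Quotient.eq_zero_iff_mem.2 x.2)
  have hS : S.ShortExact := ModuleCat.shortComplex_shortExact S
    (LinearMap.exact_subtype_mkQ I) (Submodule.subtype_injective I) (Submodule.mkQ_surjective I)
  have hF : Projective S.X₂ := (IsProjective.iff_projective _).1 (inferInstanceAs (Module.Projective R R))
  exact (hS.hasProjectiveDimensionLT_X₃_iff n hF).2 h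

lemma hasPDLT_of_projective (M : Type) [AddCommGroup M] [Module R M] [Module.Projective R M] (n : ℕ) :
    HasProjectiveDimensionLT (ModuleCat.of R M) (n + 1) := by
  have : Projective (ModuleCat.of R M) := (IsProjective.iff_projective (R := R) M).1 inferInstance
  have := projective_iff_hasProjectiveDimensionLT_one.1 this
  exact hasProjectiveDimensionLT_of_ge _ 1 _ (by omega)

lemma hasPDLT_of_linearEquiv {M N : Type} [AddCommGroup M] [Module R M] [AddCommGroup N]
    [Module R N] (e : M ≃ₗ[R] N) {n : ℕ} (h : HasProjectiveDimensionLT (ModuleCat.of R M) n) :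
    HasProjectiveDimensionLT (ModuleCat.of R N) n :=
  hasProjectiveDimensionLT_of_iso e.toModuleIso n

lemma hasPDLT_top (n : ℕ) : HasProjectiveDimensionLT (ModuleCat.of R (⊤ : Ideal R)) (n + 1) :=
  hasPDLT_of_linearEquiv (Submodule.topEquiv (R := R) (M := R)).symm (hasPDLT_of_projective R n)

lemma hasPDLT_prod {M N : Type} [AddCommGroup M] [Module R M] [AddCommGroup N] [Module R N] {n : ℕ}
    (hM : HasProjectiveDimensionLT (ModuleCat.of R M) n)
    (hN : HasProjectiveDimensionLT (ModuleCat.of R N) n) :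
    HasProjectiveDimensionLT (ModuleCat.of R (M × N)) n :=
  hasProjectiveDimensionLT_of_iso
    (ModuleCat.biprodIsoProd (ModuleCat.of R M) (ModuleCat.of R N)) n

/-- Let `J = f A + g B`. If the syzygies between `f` on `A` and `g` on `B` are exactly the pairs
`(-m t, x t)` with `t ∈ K`, then `0 → K → A × B → J → 0` is exact and bounds the projective
dimension of `J`. -/
lemma hasPDLT_of_syzygy [IsDomain R] {A B K J : Ideal R} {f g x m : R} {p : ℕ} (hx : x ≠ 0)
    (hfg : f * m = g * x)
    (hJ : ∀ r, r ∈ J ↔ ∃ s ∈ A, ∃ c ∈ B, r = f * s + g * c)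
    (hK : ∀ t ∈ K, m * t ∈ A ∧ x * t ∈ B)
    (hex : ∀ s ∈ A, ∀ c ∈ B, f * s + g * c = 0 → ∃ t ∈ K, s = - (m * t) ∧ c = x * t)
    (hKp : HasProjectiveDimensionLT (ModuleCat.of R K) p)
    (hA : HasProjectiveDimensionLT (ModuleCat.of R A) (p + 1))
    (hB : HasProjectiveDimensionLT (ModuleCat.of R B) (p + 1)) :
    HasProjectiveDimensionLT (ModuleCat.of R J) (p + 1) := by
  let φ : K →ₗ[R] (A × B) :=
    { toFun t := (⟨- (m * t), neg_mem (hK t t.2).1⟩, ⟨x * t, (hK t t.2).2⟩)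
      map_add' t t' := by ext <;> simp <;> ring
      map_smul' r t := by ext <;> simp <;> ring }
  let ψ : (A × B) →ₗ[R] J :=
    { toFun q := ⟨f * q.1 + g * q.2, (hJ _).2 ⟨q.1, q.1.2, q.2, q.2.2, rfl⟩⟩
      map_add' t t' := by ext; simp; ring
      map_smul' r t := by ext; simp; ring }
  have h0 : ψ.comp φ = 0 := by
    ext t
    change f * - (m * t) + g * (x * t) = 0
    linear_combination (- (t : R)) * hfg
  let S : ShortComplex (ModuleCat.{0} R) := ModuleCat.shortComplexOfCompEqZero φ ψ h0
  have hex' : Function.Exact φ ψ := by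
    intro q
    constructor
    · intro hq
      have hq' : f * (q.1 : R) + g * (q.2 : R) = 0 := congrArg Subtype.val hq
      obtain ⟨t, ht, h1, h2⟩ := hex _ q.1.2 _ q.2.2 hq'
      exact ⟨⟨t, ht⟩, Prod.ext (Subtype.ext h1.symm) (Subtype.ext h2.symm)⟩
    · rintro ⟨t, rfl⟩
      exact LinearMap.congr_fun h0 t
  have hinj : Function.Injective φ := by
    intro t t' h
    have : x * (t : R) = x * t' := congrArg (fun q => (q.2 : R)) h
    exact Subtype.ext (mul_left_cancel₀ hx this)
  have hsurj : Function.Surjective ψ := by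
    rintro ⟨r, hr⟩
    obtain ⟨s, hs, c, hc, rfl⟩ := (hJ r).1 hr
    exact ⟨(⟨s, hs⟩, ⟨c, hc⟩), rfl⟩
  have hS : S.ShortExact := ModuleCat.shortComplex_shortExact S hex' hinj hsurj
  exact hS.hasProjectiveDimensionLT_X₃ p hKp (hasPDLT_prod hA hB)

lemma hasPDLT_bot (n : ℕ) : HasProjectiveDimensionLT (ModuleCat.of R (⊥ : Ideal R)) (n + 1) :=
  hasPDLT_of_projective _ n

lemma hasPDLT_span_singleton [IsDomain R] (f : R) (n : ℕ) :
    HasProjectiveDimensionLT (ModuleCat.of R (Ideal.span {f} : Ideal R)) (n + 1) := by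
  by_cases hf : f = 0
  · subst hf
    rw [Ideal.span_singleton_eq_bot.2 rfl]
    exact hasPDLT_bot n
  · exact hasPDLT_of_linearEquiv (LinearEquiv.toSpanNonzeroSingleton R R f hf)
      (hasPDLT_of_projective R n)

/-- In a factorial domain the ideal `(f, g)` has the one-term syzygy module obtained by dividing out
the greatest common divisor. -/
lemma hasPDLT_span_pair [IsDomain R] [UniqueFactorizationMonoid R] (f g : R) :
    HasProjectiveDimensionLT (ModuleCat.of R (Ideal.span {f, g} : Ideal R)) 2 := by
  by_cases hf : f = 0
  · subst hf
    rw [Ideal.span_insert_zero]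
    exact hasPDLT_span_singleton g 1
  obtain ⟨x, m, d, hxm, rfl, rfl⟩ := UniqueFactorizationMonoid.exists_reduced_factors f hf g
  have hd0 : d ≠ 0 := left_ne_zero_of_mul hf
  have hx0 : x ≠ 0 := right_ne_zero_of_mul hf
  refine hasPDLT_of_syzygy (A := ⊤) (B := ⊤) (K := ⊤) (f := d * x) (g := d * m) (x := x) (m := m)
    (p := 1) hx0 (by ring) (fun r => ?_) (fun _ _ => ⟨trivial, trivial⟩) (fun s _ c _ h => ?_)
    (hasPDLT_top 0) (hasPDLT_top 1) (hasPDLT_top 1)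
  · rw [Ideal.mem_span_pair]
    constructor
    · rintro ⟨s, c, h⟩
      exact ⟨s, trivial, c, trivial, by rw [← h]; ring⟩
    · rintro ⟨s, -, c, -, h⟩
      exact ⟨s, c, by rw [h]; ring⟩
  · have h1 : x * s + m * c = 0 := mul_left_cancel₀ hd0 (by linear_combination h)
    obtain ⟨t, rfl⟩ := hxm.dvd_of_dvd_mul_left (z := c) ⟨- s, by linear_combination h1⟩
    exact ⟨t, trivial, mul_left_cancel₀ hx0 (by linear_combination h1), rfl⟩

lemma hasPDLT_span_fin1 [IsDomain R] {r : ℕ} (hr : r < 2) (f : Fin r → R) :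
    HasProjectiveDimensionLT (ModuleCat.of R (Ideal.span (Set.range f) : Ideal R)) 1 := by
  obtain ⟨a, ha⟩ : ∃ a, Ideal.span (Set.range f) = Ideal.span {a} := by
    interval_cases r
    · exact ⟨0, by simp⟩
    · exact ⟨f 0, by simp [Set.range_unique]⟩
  rw [ha]; exact hasPDLT_span_singleton a 0

lemma hasPDLT_span_fin2 [IsDomain R] [UniqueFactorizationMonoid R] {r : ℕ} (hr : r < 3)
    (f : Fin r → R) :
    HasProjectiveDimensionLT (ModuleCat.of R (Ideal.span (Set.range f) : Ideal R)) 2 := by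
  by_cases h2 : r < 2
  · have := hasPDLT_span_fin1 h2 f
    exact hasProjectiveDimensionLT_of_ge _ 1 2 (by omega)
  · obtain rfl : r = 2 := by omega
    have : Set.range f = {f 0, f 1} := by ext; simp [Fin.exists_fin_two, eq_comm]
    rw [this]; exact hasPDLT_span_pair _ _

end Syzygy

/-! ### Ideals generated by variables -/

section VarIdeal
open RingTheory.Sequence
variable {K : Type} [Field K] {σ : Type}

/-- The ideal generated by the variables in `T` is the kernel of the map that sets them to zero. -/
lemma ker_eq_varIdeal (T : Set σ) [DecidablePred (· ∈ T)] :
    RingHom.ker (aeval (fun p => if p ∈ T then 0 else X p) :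
      MvPolynomial σ K →ₐ[K] MvPolynomial σ K) = Ideal.span (X '' T) := by
  apply le_antisymm
  · intro p hp
    have h : (Ideal.Quotient.mkₐ K (Ideal.span (X '' T : Set (MvPolynomial σ K)))).comp
        (aeval (fun p => if p ∈ T then 0 else X p)) = Ideal.Quotient.mkₐ K _ := by
      ext q
      by_cases hq : q ∈ T
      · have : (Ideal.Quotient.mk (Ideal.span (X '' T : Set (MvPolynomial σ K)))) (X q) = 0 :=
          Ideal.Quotient.eq_zero_iff_mem.2 (Ideal.subset_span ⟨q, hq, rfl⟩)
        simp [hq, this]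
      · simp [hq]
    have h2 := AlgHom.congr_fun h p
    rw [AlgHom.comp_apply, (RingHom.mem_ker).1 hp, map_zero] at h2
    exact Ideal.Quotient.eq_zero_iff_mem.1 h2.symm
  · rw [Ideal.span_le]
    rintro _ ⟨q, hq, rfl⟩
    simp [RingHom.mem_ker, hq]

lemma varIdeal_isPrime (T : Set σ) : (Ideal.span (X '' T : Set (MvPolynomial σ K))).IsPrime := by
  classical
  rw [← ker_eq_varIdeal]
  exact RingHom.ker_isPrime _

lemma X_mem_varIdeal {T : Set σ} {p : σ} :
    (X p : MvPolynomial σ K) ∈ Ideal.span (X '' T) ↔ p ∈ T := by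
  classical
  refine ⟨fun h => ?_, fun h => Ideal.subset_span ⟨p, h, rfl⟩⟩
  rw [mem_ideal_span_X_image] at h
  obtain ⟨i, hi, h⟩ := h (Finsupp.single p 1) (by simp [support_X])
  rw [Finsupp.single_apply] at h
  by_cases hpi : p = i
  · exact hpi ▸ hi
  · simp [hpi] at h

lemma prod_X_mem_varIdeal {T : Set σ} {N : Finset σ} :
    (∏ p ∈ N, X p : MvPolynomial σ K) ∈ Ideal.span (X '' T) ↔ ∃ p ∈ N, p ∈ T := by
  have := varIdeal_isPrime (K := K) T
  rw [Ideal.IsPrime.prod_mem_iff]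
  simp only [X_mem_varIdeal]

lemma isWeaklyRegular_X (l : List σ) (hl : l.Nodup) :
    IsWeaklyRegular (MvPolynomial σ K) (l.map X : List (MvPolynomial σ K)) := by
  refine ⟨fun i hi => ?_⟩
  have hi' : i < l.length := by simpa using hi
  have h1 : Ideal.ofList ((l.map X : List (MvPolynomial σ K)).take i) • (⊤ : Ideal (MvPolynomial σ K))
      = Ideal.span (X '' {p | p ∈ l.take i}) := by
    rw [smul_eq_mul, Ideal.mul_top, Ideal.ofList]
    congr 1
    ext x; simp [← List.map_take]
  rw [h1]
  have hP := varIdeal_isPrime (K := K) {p | p ∈ l.take i}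
  have hx : ((l.map X : List (MvPolynomial σ K))[i]) ∉ Ideal.span (X '' {p | p ∈ l.take i}) := by
    rw [List.getElem_map, X_mem_varIdeal]
    intro h
    have h2 : l[i] ∈ l.drop i := List.mem_drop_iff_getElem.2 ⟨0, by simpa using hi', by simp⟩
    exact List.disjoint_take_drop hl le_rfl h h2
  refine (isSMulRegular_iff_right_eq_zero_of_smul).2 ?_
  intro a ha
  obtain ⟨a, rfl⟩ := Ideal.Quotient.mk_surjective a
  have ha' := Ideal.Quotient.eq_zero_iff_mem.1 ha
  exact Ideal.Quotient.eq_zero_iff_mem.2 ((hP.mem_or_mem ha').resolve_left hx)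

end VarIdeal

/-! ### Cover ideals of graphs and adding a vertex -/

section Cover
variable {K : Type} [Field K] {σ : Type}

/-- The cover ideal of the graph induced by `G` on the vertex set `V`: the intersection of the
ideals `(X a, X b)` over the edges `a b` inside `V`. The ambient polynomial ring keeps all the
variables, so that cover ideals for different `V` can be compared. -/
noncomputable def coverIdeal (K : Type) [Field K] {σ : Type} (G : SimpleGraph σ) (V : Set σ) :
    Ideal (MvPolynomial σ K) :=
  ⨅ (a ∈ V) (b ∈ V) (_ : G.Adj a b), Ideal.span (X '' {a, b})

variable {G : SimpleGraph σ} {V : Set σ}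

lemma mem_coverIdeal {p : MvPolynomial σ K} : p ∈ coverIdeal K G V ↔
    ∀ a ∈ V, ∀ b ∈ V, G.Adj a b → p ∈ Ideal.span (X '' {a, b} : Set (MvPolynomial σ K)) := by
  simp only [coverIdeal, Submodule.mem_iInf]

lemma mem_coverIdeal_iff_support {p : MvPolynomial σ K} : p ∈ coverIdeal K G V ↔
    ∀ s ∈ p.support, ∀ a ∈ V, ∀ b ∈ V, G.Adj a b → s a ≠ 0 ∨ s b ≠ 0 := by
  simp only [mem_coverIdeal, mem_ideal_span_X_image]
  constructor
  · intro h s hs a ha b hb hab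
    simpa using h a ha b hb hab s hs
  · intro h a ha b hb hab s hs
    simpa using h s hs a ha b hb hab

lemma prod_X_mem_coverIdeal {N : Finset σ}
    (h : ∀ a ∈ V, ∀ b ∈ V, G.Adj a b → a ∈ N ∨ b ∈ N) :
    (∏ p ∈ N, X p : MvPolynomial σ K) ∈ coverIdeal K G V := by
  rw [mem_coverIdeal]
  intro a ha b hb hab
  rw [prod_X_mem_varIdeal]
  rcases h a ha b hb hab with h | h
  · exact ⟨a, h, by simp⟩
  · exact ⟨b, h, by simp⟩

lemma coverIdeal_mono {V' : Set σ} (h : V ⊆ V') : coverIdeal K G V' ≤ coverIdeal K G V := by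
  intro p hp
  rw [mem_coverIdeal] at hp ⊢
  exact fun a ha b hb => hp a (h ha) b (h hb)

lemma coverIdeal_eq_top (h : ∀ a ∈ V, ∀ b ∈ V, ¬ G.Adj a b) : coverIdeal K G V = ⊤ := by
  rw [Ideal.eq_top_iff_one, mem_coverIdeal]
  exact fun a ha b hb hab => (h a ha b hb hab).elim

/-- `N` is the (finite) set of neighbours of `x` in `V`. -/
def IsNbhd (G : SimpleGraph σ) (V : Set σ) (x : σ) (N : Finset σ) : Prop :=
  ∀ p, p ∈ N ↔ p ∈ V ∧ G.Adj x p

variable {x : σ} {N : Finset σ}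

/-- The set `N` together with a cover of `V \ N` covers `V`. -/
lemma prod_X_mul_mem {c : MvPolynomial σ K}
    (hc : c ∈ coverIdeal K G (V \ N)) : (∏ p ∈ N, X p) * c ∈ coverIdeal K G V := by
  rw [mem_coverIdeal] at hc ⊢
  intro a ha b hb hab
  by_cases h : a ∈ N ∨ b ∈ N
  · refine Ideal.mul_mem_right _ _ (prod_X_mem_varIdeal.2 ?_)
    rcases h with h | h
    · exact ⟨a, h, by simp⟩
    · exact ⟨b, h, by simp⟩
  · push Not at h
    exact Ideal.mul_mem_left _ _ (hc a ⟨ha, h.1⟩ b ⟨hb, h.2⟩ hab)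

/-- Covers of `insert x V` either contain `x` and cover `V`, or contain the neighbourhood `N` of `x`
and cover `V \ N`. Algebraically, `J(insert x V) = X x J(V) + (∏_N X) J(V \ N)`. -/
lemma mem_coverIdeal_insert (hx : x ∉ V) (hN : IsNbhd G V x N) {r : MvPolynomial σ K} :
    r ∈ coverIdeal K G (insert x V) ↔
      ∃ s ∈ coverIdeal K G V, ∃ c ∈ coverIdeal K G (V \ N), r = X x * s + (∏ p ∈ N, X p) * c := by
  classical
  constructor
  · intro hr
    -- `d` is the exponent of `∏_N X`; `r` is split into the terms divisible by `X x` and the others,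
    -- and each of the others is divisible by `∏_N X` as it must cover the edges at `x`
    obtain ⟨d, hd⟩ : ∃ d : σ →₀ ℕ, d = ∑ p ∈ N, Finsupp.single p 1 := ⟨_, rfl⟩
    have hdN : ∀ p, d p = if p ∈ N then 1 else 0 := by
      intro p; rw [hd]; simp [Finsupp.finsetSum_apply, Finsupp.single_apply]
    have hprod : (∏ p ∈ N, X p : MvPolynomial σ K) = monomial d 1 := by
      rw [hd, monomial_sum_one]; rfl
    rw [mem_coverIdeal_iff_support] at hr
    have hrs : ∀ s ∈ (modMonomial r (Finsupp.single x 1)).support, s ∈ r.support ∧ s x = 0 := by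
      intro s hs
      rw [mem_support_iff] at hs
      by_cases h : Finsupp.single x 1 ≤ s
      · rw [coeff_modMonomial_of_le _ h] at hs; exact (hs rfl).elim
      · rw [coeff_modMonomial_of_not_le _ h] at hs
        refine ⟨mem_support_iff.2 hs, ?_⟩
        rw [Finsupp.single_le_iff] at h; omega
    have hds : ∀ s ∈ (modMonomial r (Finsupp.single x 1)).support, d ≤ s := by
      intro s hs p
      rw [hdN]
      split_ifs with h
      · obtain ⟨h1, h2⟩ := hrs s hs
        obtain ⟨h3, h4⟩ := (hN p).1 h
        have := (hr s h1 x (by simp) p (by simp [h3]) h4).resolve_left (by simpa using h2)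
        omega
      · simp
    have hdvd : monomial d 1 ∣ (modMonomial r (Finsupp.single x 1)) := by
      rw [monomial_one_dvd_iff_modMonomial_eq_zero]
      ext s
      rw [coeff_zero]
      by_cases h : d ≤ s
      · rw [coeff_modMonomial_of_le _ h]
      · rw [coeff_modMonomial_of_not_le _ h]
        by_contra hne
        exact h (hds s (mem_support_iff.2 hne))
    obtain ⟨c, hc⟩ := hdvd
    refine ⟨divMonomial r (Finsupp.single x 1), ?_, c, ?_, ?_⟩
    · rw [mem_coverIdeal_iff_support]
      intro s hs a ha b hb hab
      rw [mem_support_iff, coeff_divMonomial] at hs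
      have hax : a ≠ x := fun h => hx (h ▸ ha)
      have hbx : b ≠ x := fun h => hx (h ▸ hb)
      simpa [Finsupp.single_apply, hax.symm, hbx.symm] using
        hr _ (mem_support_iff.2 hs) a (by simp [ha]) b (by simp [hb]) hab
    · rw [mem_coverIdeal_iff_support]
      intro s hs a ha b hb hab
      have h1 : d + s ∈ (modMonomial r (Finsupp.single x 1)).support := by
        rw [hc, mem_support_iff, coeff_monomial_mul]
        simpa using mem_support_iff.1 hs
      have h2 := hr _ (hrs _ h1).1 a (by simp [ha.1]) b (by simp [hb.1]) hab
      have ha2 : d a = 0 := by rw [hdN, if_neg (by simpa using ha.2)]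
      have hb2 : d b = 0 := by rw [hdN, if_neg (by simpa using hb.2)]
      simpa [ha2, hb2] using h2
    · rw [hprod, ← hc]
      exact (divMonomial_add_modMonomial_single r x).symm
  · rintro ⟨s, hs, c, hc, rfl⟩
    have hc' := prod_X_mul_mem hc
    rw [mem_coverIdeal] at hs hc' ⊢
    intro a ha b hb hab
    have key : ∀ y ∈ V, G.Adj x y → X x * s + (∏ p ∈ N, X p) * c ∈
        Ideal.span (X '' {x, y} : Set (MvPolynomial σ K)) := fun y hy hxy =>
      Ideal.add_mem _ (Ideal.mul_mem_right _ _ (X_mem_varIdeal.2 (by simp)))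
        (Ideal.mul_mem_right _ _ (prod_X_mem_varIdeal.2 ⟨y, (hN y).2 ⟨hy, hxy⟩, by simp⟩))
    rcases ha with rfl | ha <;> rcases hb with rfl | hb
    · exact (hab.ne rfl).elim
    · exact key b hb hab
    · rw [Set.pair_comm]; exact key a ha hab.symm
    · exact Ideal.add_mem _ (Ideal.mul_mem_left _ _ (hs a ha b hb hab)) (hc' a ha b hb hab)

/-- The decomposition of `mem_coverIdeal_insert` has syzygies
`0 → J(V \ N) → J(V) × J(V \ N) → J(insert x V) → 0`. -/
lemma hasPDLT_coverIdeal_insert (hx : x ∉ V) (hN : IsNbhd G V x N) {p : ℕ}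
    (hC : CategoryTheory.HasProjectiveDimensionLT (ModuleCat.of (MvPolynomial σ K) (coverIdeal K G (V \ N))) p)
    (hV : CategoryTheory.HasProjectiveDimensionLT (ModuleCat.of (MvPolynomial σ K) (coverIdeal K G V)) (p + 1)) :
    CategoryTheory.HasProjectiveDimensionLT (ModuleCat.of (MvPolynomial σ K) (coverIdeal K G (insert x V))) (p + 1) := by
  have hC'' := CategoryTheory.hasProjectiveDimensionLT_of_ge
    (ModuleCat.of (MvPolynomial σ K) (coverIdeal K G (V \ N))) p (p + 1) (by omega)
  refine hasPDLT_of_syzygy (A := coverIdeal K G V) (B := coverIdeal K G (V \ N))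
    (K := coverIdeal K G (V \ N)) (f := X x) (g := ∏ p ∈ N, X p) (x := X x) (m := ∏ p ∈ N, X p)
    (X_ne_zero x) (mul_comm _ _) (fun r => mem_coverIdeal_insert hx hN)
    (fun t ht => ⟨prod_X_mul_mem ht, Ideal.mul_mem_left _ _ ht⟩) ?_ hC hV hC''
  intro s hs c hc h
  have hxp : Prime (X x : MvPolynomial σ K) := X_prime
  have hxN : x ∉ N := fun h => hx ((hN x).1 h).1
  have h1 : X x ∣ (∏ p ∈ N, X p) * c := ⟨- s, by linear_combination h⟩
  have h2 : ¬ (X x : MvPolynomial σ K) ∣ ∏ p ∈ N, X p := by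
    rw [hxp.dvd_finsetProd_iff]
    rintro ⟨p, hp, h⟩
    rw [X_dvd_X] at h
    exact hxN (h ▸ hp)
  obtain ⟨t, rfl⟩ := (hxp.dvd_or_dvd h1).resolve_left h2
  refine ⟨t, ?_, mul_left_cancel₀ (X_ne_zero x) (by linear_combination h), rfl⟩
  rw [mem_coverIdeal] at hc ⊢
  intro a ha b hb hab
  refine ((varIdeal_isPrime _).mem_or_mem (hc a ha b hb hab)).resolve_left fun h => ?_
  rw [X_mem_varIdeal] at h
  rcases h with rfl | h
  · exact hx ha.1
  · rw [Set.mem_singleton_iff] at h; exact hx (h ▸ hb.1)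

/-- The subset `S` of `J` generates `J` up to radical; the equality of radicals is expressed
through the prime ideals containing `S`. -/
def RadGen {R : Type} [CommRing R] (J : Ideal R) (S : Set R) : Prop :=
  S ⊆ J ∧ ∀ P : Ideal R, P.IsPrime → S ⊆ P → J ≤ P

lemma RadGen.radical_eq {R : Type} [CommRing R] {J : Ideal R} {S : Set R} (h : RadGen J S) :
    (Ideal.span S).radical = J.radical := by
  apply le_antisymm
  · exact Ideal.radical_mono (Ideal.span_le.2 h.1)
  · rw [Ideal.radical_eq_sInf (Ideal.span S)]
    refine le_sInf fun P hP => ?_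
    exact (Ideal.IsPrime.radical_le_iff hP.2).2 (h.2 P hP.2 (Ideal.span_le.1 hP.1))

lemma radGen_top {R : Type} [CommRing R] : RadGen (⊤ : Ideal R) {1, 0} :=
  ⟨fun _ _ => trivial, fun P hP h => (hP.ne_top ((Ideal.eq_top_iff_one P).2 (h (by simp)))).elim⟩

/-- If the neighbourhood of `x` covers every edge of `V`, then being generated up to radical by two
elements passes from `V` to `insert x V`. With `m = ∏_N X` and `m ^ n = α f + β g`, the new
generators are `X x f - m β` and `X x g + m α`; their combination with coefficients `α`, `β` is
`X x * m ^ n`. -/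
lemma radGen_insert (hx : x ∉ V) (hN : IsNbhd G V x N)
    (hcov : ∀ a ∈ V, ∀ b ∈ V, G.Adj a b → a ∈ N ∨ b ∈ N) {f g : MvPolynomial σ K}
    (h : RadGen (coverIdeal K G V) {f, g}) :
    ∃ f' g', RadGen (coverIdeal K G (insert x V)) {f', g'} := by
  have htop : coverIdeal K G (V \ N) = ⊤ := coverIdeal_eq_top fun a ha b hb hab =>
    (hcov a ha.1 b hb.1 hab).elim ha.2 hb.2
  obtain ⟨m, hm⟩ : ∃ m : MvPolynomial σ K, m = ∏ p ∈ N, X p := ⟨_, rfl⟩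
  have hmV : m ∈ coverIdeal K G V := hm ▸ prod_X_mem_coverIdeal hcov
  have hmrad : m ∈ (Ideal.span {f, g}).radical := by
    rw [h.radical_eq]; exact Ideal.le_radical hmV
  obtain ⟨n, hn⟩ := hmrad
  obtain ⟨α, β, hαβ⟩ := Ideal.mem_span_pair.1 hn
  have hmem : ∀ r, r ∈ coverIdeal K G (insert x V) ↔
      ∃ s ∈ coverIdeal K G V, ∃ c, r = X x * s + m * c := by
    intro r; rw [mem_coverIdeal_insert hx hN, htop, hm]; simp
  have hf := h.1 (show f ∈ {f, g} by simp)
  have hg := h.1 (show g ∈ {f, g} by simp)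
  refine ⟨X x * f - m * β, X x * g + m * α, ?_, ?_⟩
  · rintro r (rfl | rfl)
    · exact (hmem _).2 ⟨f, hf, -β, by ring⟩
    · exact (hmem _).2 ⟨g, hg, α, rfl⟩
  · intro P hP hsub
    have hF : X x * f - m * β ∈ P := hsub (by simp)
    have hG : X x * g + m * α ∈ P := hsub (by simp)
    have hxm : X x * m ^ n ∈ P := by
      have := P.add_mem (P.mul_mem_left α hF) (P.mul_mem_left β hG)
      convert this using 1
      linear_combination (- X x) * hαβ
    have hfin : m ∈ P → (X x ∈ P ∨ coverIdeal K G V ≤ P) → coverIdeal K G (insert x V) ≤ P := by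
      intro h1 h2 r hr
      obtain ⟨s, hs, c, rfl⟩ := (hmem r).1 hr
      refine P.add_mem ?_ (P.mul_mem_right _ h1)
      rcases h2 with h2 | h2
      · exact P.mul_mem_right _ h2
      · exact P.mul_mem_left _ (h2 hs)
    by_cases hmP : m ∈ P
    · refine hfin hmP ?_
      by_cases hxP : X x ∈ P
      · exact Or.inl hxP
      · refine Or.inr (h.2 P hP ?_)
        have hF' : X x * f ∈ P := by simpa using P.add_mem hF (P.mul_mem_right β hmP)
        have hG' : X x * g ∈ P := by simpa using P.sub_mem hG (P.mul_mem_right α hmP)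
        rintro r (rfl | rfl)
        · exact (hP.mem_or_mem hF').resolve_left hxP
        · exact (hP.mem_or_mem hG').resolve_left hxP
    · have hxP : X x ∈ P :=
        (hP.mem_or_mem hxm).resolve_right fun h => hmP (hP.mem_of_pow_mem _ h)
      have hβ : m * β ∈ P := by simpa using P.sub_mem (P.mul_mem_right f hxP) hF
      have hα : m * α ∈ P := by simpa using P.sub_mem hG (P.mul_mem_right g hxP)
      have hβ' := (hP.mem_or_mem hβ).resolve_left hmP
      have hα' := (hP.mem_or_mem hα).resolve_left hmP
      refine (hmP (hP.mem_of_pow_mem n ?_)).elim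
      rw [← hαβ]
      exact P.add_mem (P.mul_mem_right _ hα') (P.mul_mem_right _ hβ')

/-- Variant of `radGen_insert` which keeps control of the first generator: when `f` divides
`∏_N X`, the pair `X x f`, `X x g + ∏_N X` works. -/
lemma radGen_insert_of_dvd (hx : x ∉ V) (hN : IsNbhd G V x N)
    (hcov : ∀ a ∈ V, ∀ b ∈ V, G.Adj a b → a ∈ N ∨ b ∈ N) {f g : MvPolynomial σ K}
    (hfm : f ∣ ∏ p ∈ N, X p) (h : RadGen (coverIdeal K G V) {f, g}) :
    ∃ g', RadGen (coverIdeal K G (insert x V)) {X x * f, g'} := by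
  have htop : coverIdeal K G (V \ N) = ⊤ := coverIdeal_eq_top fun a ha b hb hab =>
    (hcov a ha.1 b hb.1 hab).elim ha.2 hb.2
  obtain ⟨m, hm⟩ : ∃ m : MvPolynomial σ K, m = ∏ p ∈ N, X p := ⟨_, rfl⟩
  rw [← hm] at hfm
  have hmem : ∀ r, r ∈ coverIdeal K G (insert x V) ↔
      ∃ s ∈ coverIdeal K G V, ∃ c, r = X x * s + m * c := by
    intro r; rw [mem_coverIdeal_insert hx hN, htop, hm]; simp
  have hf := h.1 (show f ∈ {f, g} by simp)
  have hg := h.1 (show g ∈ {f, g} by simp)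
  refine ⟨X x * g + m, ?_, ?_⟩
  · rintro r (rfl | rfl)
    · exact (hmem _).2 ⟨f, hf, 0, by ring⟩
    · exact (hmem _).2 ⟨g, hg, 1, by ring⟩
  · intro P hP hsub r hr
    have hF : X x * f ∈ P := hsub (by simp)
    have hG : X x * g + m ∈ P := hsub (by simp)
    obtain ⟨s, hs, c, rfl⟩ := (hmem r).1 hr
    by_cases hxP : X x ∈ P
    · have hmP : m ∈ P := by simpa using P.sub_mem hG (P.mul_mem_right g hxP)
      exact P.add_mem (P.mul_mem_right _ hxP) (P.mul_mem_right _ hmP)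
    · have hfP := (hP.mem_or_mem hF).resolve_left hxP
      have hmP : m ∈ P := P.mem_of_dvd hfm hfP
      have hgx : X x * g ∈ P := by simpa using P.sub_mem hG hmP
      have hgP := (hP.mem_or_mem hgx).resolve_left hxP
      refine P.add_mem (P.mul_mem_left _ (h.2 P hP ?_ hs)) (P.mul_mem_right _ hmP)
      rintro r (rfl | rfl) <;> assumption

/-- If the two parts of the decomposition of `mem_coverIdeal_insert` are generated up to radical by
pairs sharing the element `f`, then three elements suffice for `insert x V`, because the two middle
products can be added (as in the lemma of Schmitt and Vogel). -/
lemma radGen_insert_three (hx : x ∉ V) (hN : IsNbhd G V x N) {f g g' : MvPolynomial σ K}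
    (hV : RadGen (coverIdeal K G V) {f, g}) (hC : RadGen (coverIdeal K G (V \ N)) {f, g'}) :
    RadGen (coverIdeal K G (insert x V))
      {(∏ p ∈ N, X p) * f, X x * f + (∏ p ∈ N, X p) * g', X x * g} := by
  have hmem := fun r => mem_coverIdeal_insert (K := K) (r := r) hx hN
  generalize (∏ p ∈ N, X p : MvPolynomial σ K) = m at *
  have hf := hV.1 (show f ∈ {f, g} by simp)
  have hg := hV.1 (show g ∈ {f, g} by simp)
  have hf' := hC.1 (show f ∈ {f, g'} by simp)
  have hg' := hC.1 (show g' ∈ {f, g'} by simp)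
  refine ⟨?_, ?_⟩
  · rintro r (rfl | rfl | rfl)
    · exact (hmem _).2 ⟨0, zero_mem _, f, hf', by ring⟩
    · exact (hmem _).2 ⟨f, hf, g', hg', by ring⟩
    · exact (hmem _).2 ⟨g, hg, 0, zero_mem _, by ring⟩
  · intro P hP hsub r hr
    have h1 : m * f ∈ P := hsub (by simp)
    have h2 : X x * f + m * g' ∈ P := hsub (by simp)
    have h3 : X x * g ∈ P := hsub (by simp)
    obtain ⟨s, hs, c, hc, rfl⟩ := (hmem r).1 hr
    have hA : X x ∈ P ∨ coverIdeal K G V ≤ P := by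
      by_cases hxP : X x ∈ P
      · exact Or.inl hxP
      · have hgP := (hP.mem_or_mem h3).resolve_left hxP
        have hfP : f ∈ P := by
          rcases hP.mem_or_mem h1 with hm | hf
          · have : X x * f ∈ P := by simpa using P.sub_mem h2 (P.mul_mem_right g' hm)
            exact (hP.mem_or_mem this).resolve_left hxP
          · exact hf
        refine Or.inr (hV.2 P hP ?_)
        rintro r (rfl | rfl) <;> assumption
    have hB : m ∈ P ∨ coverIdeal K G (V \ N) ≤ P := by
      by_cases hmP : m ∈ P
      · exact Or.inl hmP
      · have hfP := (hP.mem_or_mem h1).resolve_left hmP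
        have : m * g' ∈ P := by simpa using P.sub_mem h2 (P.mul_mem_left (X x) hfP)
        have hgP := (hP.mem_or_mem this).resolve_left hmP
        refine Or.inr (hC.2 P hP ?_)
        rintro r (rfl | rfl) <;> assumption
    refine P.add_mem ?_ ?_
    · rcases hA with h | h
      · exact P.mul_mem_right _ h
      · exact P.mul_mem_left _ (h hs)
    · rcases hB with h | h
      · exact P.mul_mem_right _ h
      · exact P.mul_mem_left _ (h hc)

end Cover

/-! ### Lower bounds -/

section LowerBounds
variable {K : Type} [Field K] {σ : Type} [Fintype σ] {G : SimpleGraph σ}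

lemma prod_compl_pow_notMem [DecidableEq σ] (T : Finset σ) (N : ℕ) :
    (∏ p ∈ Tᶜ, X p : MvPolynomial σ K) ^ N ∉ Ideal.span (X '' (T : Set σ)) := by
  intro h
  obtain ⟨p, hp, hp'⟩ := prod_X_mem_varIdeal.1
    ((varIdeal_isPrime (K := K) (T : Set σ)).mem_of_pow_mem N h)
  exact (Finset.mem_compl.1 hp) hp'

/-- Inverting the variables other than `X a`, `X b` turns the cover ideal into `(X a, X b)`; hence
no quotient by an ideal with the same radical has projective dimension less than two. -/
lemma not_hasPDLT_two {a b : σ} (hab : G.Adj a b) {I : Ideal (MvPolynomial σ K)} {N : ℕ}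
    (hI : I ≤ coverIdeal K G Set.univ) (hN : coverIdeal K G Set.univ ^ N ≤ I) :
    ¬ CategoryTheory.HasProjectiveDimensionLT
      (ModuleCat.of (MvPolynomial σ K) (MvPolynomial σ K ⧸ I)) 2 := by
  classical
  intro h
  have hP : Ideal.ofList ([a, b].map (X : σ → MvPolynomial σ K)) =
      Ideal.span (X '' ((({a, b} : Finset σ) : Set σ))) := by
    rw [Ideal.ofList, Finset.coe_pair, Set.image_pair]
    congr 1
    ext r
    simp
  have h1 := D1_of_hasPDLT _ (isWeaklyRegular_X (K := K) [a, b] (by simp [hab.ne])) _ 1 h (by simp)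
  rw [hP] at h1
  have hw := prod_compl_pow_notMem (K := K) ({a, b} : Finset σ) N
  refine not_D1 (w := ∏ p ∈ ({a, b} : Finset σ)ᶜ, X p) (N := N) ?_ hw ?_ h1
  · refine hI.trans fun p hp => ?_
    simpa using mem_coverIdeal.1 hp a trivial b trivial hab
  · intro x hx
    have key : Ideal.span {(∏ p ∈ ({a, b} : Finset σ)ᶜ, X p : MvPolynomial σ K)} *
        Ideal.span (X '' ((({a, b} : Finset σ) : Set σ))) ≤ coverIdeal K G Set.univ := by
      rw [Ideal.span_mul_span', Ideal.span_le]
      rintro _ ⟨_, rfl, _, ⟨c, hc, rfl⟩, rfl⟩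
      refine mem_coverIdeal.2 fun p _ q _ hpq => ?_
      by_cases hpc : p ∈ ({a, b} : Finset σ)ᶜ ∨ q ∈ ({a, b} : Finset σ)ᶜ
      · refine Ideal.mul_mem_right _ _ (prod_X_mem_varIdeal.2 ?_)
        rcases hpc with h | h
        · exact ⟨p, h, by simp⟩
        · exact ⟨q, h, by simp⟩
      · refine Ideal.mul_mem_left _ _ (X_mem_varIdeal.2 ?_)
        have := hpq.ne
        simp only [Finset.mem_compl, Finset.coe_insert, Finset.coe_singleton, Finset.mem_insert,
          Finset.mem_singleton, Set.mem_insert_iff, Set.mem_singleton_iff] at hpc hc ⊢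
        grind
    refine hN (Ideal.pow_right_mono key N ?_)
    rw [mul_pow]
    exact Ideal.mul_mem_mul (Ideal.pow_mem_pow (Ideal.mem_span_singleton_self _) N) hx

/-- Inverting the variables outside an induced pair of disjoint edges turns the zero set of the cover
ideal into two planes of codimension two meeting in codimension four. By `not_D2`, no quotient by an
ideal with the same radical has projective dimension less than three. -/
lemma not_hasPDLT_three {a b c d : σ} (hab : G.Adj a b) (hcd : G.Adj c d) (hac : ¬ G.Adj a c)
    (had : ¬ G.Adj a d) (hbc : ¬ G.Adj b c) (hbd : ¬ G.Adj b d) (nac : a ≠ c) (nad : a ≠ d)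
    (nbc : b ≠ c) (nbd : b ≠ d) {I : Ideal (MvPolynomial σ K)} {N : ℕ}
    (hI : I ≤ coverIdeal K G Set.univ) (hN : coverIdeal K G Set.univ ^ N ≤ I) :
    ¬ CategoryTheory.HasProjectiveDimensionLT
      (ModuleCat.of (MvPolynomial σ K) (MvPolynomial σ K ⧸ I)) 3 := by
  classical
  intro h
  have hP : Ideal.ofList ([a, b, c, d].map (X : σ → MvPolynomial σ K)) =
      Ideal.span (X '' {a, b}) ⊔ Ideal.span (X '' {c, d}) := by
    rw [← Ideal.span_union, ← Set.image_union, Ideal.ofList]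
    congr 1
    ext r
    simp [eq_comm]
    tauto
  have hP' : Ideal.span (X '' {a, b}) ⊔ Ideal.span (X '' {c, d}) =
      Ideal.span (X '' ((({a, b, c, d} : Finset σ) : Set σ)) : Set (MvPolynomial σ K)) := by
    rw [← Ideal.span_union, ← Set.image_union]
    congr 2
    ext r
    simp
    tauto
  have h1 := D2_of_hasPDLT _ (isWeaklyRegular_X (K := K) [a, b, c, d]
    (by simp [hab.ne, hcd.ne, nac, nad, nbc, nbd])) _ 2 h (by simp)
  rw [hP] at h1
  have hw := prod_compl_pow_notMem (K := K) ({a, b, c, d} : Finset σ) N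
  rw [← hP'] at hw
  have := varIdeal_isPrime (K := K) {a, b}
  have := varIdeal_isPrime (K := K) {c, d}
  refine not_D2 (w := ∏ p ∈ ({a, b, c, d} : Finset σ)ᶜ, X p) (N := N) (a := X a) (c := X c)
    ?_ ?_ hw ?_ ?_ ?_ ?_ ?_ h1
  · exact hI.trans fun p hp => mem_coverIdeal.1 hp a trivial b trivial hab
  · exact hI.trans fun p hp => mem_coverIdeal.1 hp c trivial d trivial hcd
  · simp [X_mem_varIdeal]
  · simp [X_mem_varIdeal, nac, nad]
  · simp [X_mem_varIdeal]
  · simp [X_mem_varIdeal, nac.symm, nbc.symm]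
  · intro x hx y hy
    have key : Ideal.span {(∏ p ∈ ({a, b, c, d} : Finset σ)ᶜ, X p : MvPolynomial σ K)} *
        (Ideal.span (X '' {a, b}) * Ideal.span (X '' {c, d})) ≤ coverIdeal K G Set.univ := by
      rw [Ideal.span_mul_span', Ideal.span_mul_span', Ideal.span_le]
      rintro _ ⟨_, rfl, _, ⟨_, ⟨s, hs, rfl⟩, _, ⟨t, ht, rfl⟩, rfl⟩, rfl⟩
      refine mem_coverIdeal.2 fun p _ q _ hpq => ?_
      by_cases hpc : p ∈ ({a, b, c, d} : Finset σ)ᶜ ∨ q ∈ ({a, b, c, d} : Finset σ)ᶜ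
      · refine Ideal.mul_mem_right _ _ (prod_X_mem_varIdeal.2 ?_)
        rcases hpc with h | h
        · exact ⟨p, h, by simp⟩
        · exact ⟨q, h, by simp⟩
      · refine Ideal.mul_mem_left _ _ ?_
        have h1 := hpq.ne
        have h2 := hpq.symm
        have : (s = p ∨ s = q) ∨ (t = p ∨ t = q) := by
          simp only [Finset.mem_compl, Finset.mem_insert, Finset.mem_singleton,
            Set.mem_insert_iff, Set.mem_singleton_iff] at hpc hs ht
          grind
        rcases this with h | h
        · exact Ideal.mul_mem_right _ _ (X_mem_varIdeal.2 (by simpa using h))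
        · exact Ideal.mul_mem_left _ _ (X_mem_varIdeal.2 (by simpa using h))
    refine hN (Ideal.pow_right_mono key N ?_)
    rw [mul_pow, mul_pow]
    exact Ideal.mul_mem_mul (Ideal.pow_mem_pow (Ideal.mem_span_singleton_self _) N)
      (Ideal.mul_mem_mul hx hy)

/-- The lower bound `hlow` is used twice: for `I = J` it bounds the projective dimension, and for `I`
generated by fewer than `d` elements it bounds the arithmetical rank, as for `d ≤ 3` such an `I` has
quotient of projective dimension less than `d`. -/
lemma ara_eq_projDim_of {J : Ideal (MvPolynomial σ K)} {d : ℕ} (hd : d = 2 ∨ d = 3)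
    (hlow : ∀ (I : Ideal (MvPolynomial σ K)) (N : ℕ), I ≤ J → J ^ N ≤ I →
      ¬ CategoryTheory.HasProjectiveDimensionLT
        (ModuleCat.of (MvPolynomial σ K) (MvPolynomial σ K ⧸ I)) d)
    (hpd : CategoryTheory.HasProjectiveDimensionLT (ModuleCat.of (MvPolynomial σ K) J) d)
    (hgen : ∃ f : Fin d → MvPolynomial σ K, RadGen J (Set.range f)) :
    ara J = projDim (ModuleCat.of (MvPolynomial σ K) (MvPolynomial σ K ⧸ J)) := by
  have hpd' : projDim (ModuleCat.of (MvPolynomial σ K) (MvPolynomial σ K ⧸ J)) = d := by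
    refine projDim_eq_of_hasPDLT _ _ ?_ (hlow J 1 le_rfl (by simp))
    obtain ⟨e, rfl⟩ : ∃ e, d = e + 1 := ⟨d - 1, by omega⟩
    exact hasPDLT_quotient hpd
  rw [hpd']
  refine le_antisymm ?_ ?_
  · obtain ⟨f, hf⟩ := hgen
    exact Nat.sInf_le ⟨f, fun t => hf.1 ⟨t, rfl⟩, hf.radical_eq⟩
  · obtain ⟨f₀, hf₀⟩ := hgen
    refine le_csInf ⟨d, f₀, fun t => hf₀.1 ⟨t, rfl⟩, hf₀.radical_eq⟩ ?_
    rintro r ⟨f, hfJ, hf⟩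
    by_contra! hr
    obtain ⟨N, hN⟩ := Ideal.exists_pow_le_of_le_radical_of_fg
      (Ideal.le_radical.trans hf.ge) (IsNoetherian.noetherian J)
    refine hlow (Ideal.span (Set.range f)) N (Ideal.span_le.2 ?_) hN ?_
    · rintro _ ⟨t, rfl⟩; exact hfJ t
    · rcases hd with rfl | rfl
      · exact hasPDLT_quotient (hasPDLT_span_fin1 hr f)
      · exact hasPDLT_quotient (hasPDLT_span_fin2 hr f)

end LowerBounds

/-! ### Lexsegment graphs -/

section TwoGenerators
variable (K : Type) [Field K] {σ : Type} {G : SimpleGraph σ} {V : Set σ} {x : σ}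

/-- The cover ideal of `V` has projective dimension at most one and is generated up to radical by
`f` and one further element. -/
def NiceWith (G : SimpleGraph σ) (V : Set σ) (f : MvPolynomial σ K) : Prop :=
  CategoryTheory.HasProjectiveDimensionLT (ModuleCat.of (MvPolynomial σ K) (coverIdeal K G V)) 2 ∧
    ∃ g, RadGen (coverIdeal K G V) {f, g}

variable {K}

lemma niceWith_of_indep (h : ∀ a ∈ V, ∀ b ∈ V, ¬ G.Adj a b) : NiceWith K G V 1 := by
  rw [NiceWith, coverIdeal_eq_top h]
  exact ⟨hasPDLT_top 1, 0, radGen_top⟩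

lemma exists_isNbhd [Finite σ] (G : SimpleGraph σ) (V : Set σ) (x : σ) : ∃ N : Finset σ, IsNbhd G V x N :=
  ⟨(Set.toFinite {p | p ∈ V ∧ G.Adj x p}).toFinset, fun p => by simp⟩

lemma hasPDLT_coverIdeal_insert_of_cover (hx : x ∉ V) {N : Finset σ} (hN : IsNbhd G V x N)
    (hcov : ∀ a ∈ V, ∀ b ∈ V, G.Adj a b → G.Adj x a ∨ G.Adj x b)
    (hV : CategoryTheory.HasProjectiveDimensionLT
      (ModuleCat.of (MvPolynomial σ K) (coverIdeal K G V)) 2) :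
    CategoryTheory.HasProjectiveDimensionLT
      (ModuleCat.of (MvPolynomial σ K) (coverIdeal K G (insert x V))) 2 := by
  refine hasPDLT_coverIdeal_insert hx hN ?_ hV
  rw [coverIdeal_eq_top]
  · exact hasPDLT_top 0
  · exact fun a ha b hb hab => (hcov a ha.1 b hb.1 hab).elim
      (fun h => ha.2 ((hN a).2 ⟨ha.1, h⟩)) fun h => hb.2 ((hN b).2 ⟨hb.1, h⟩)

/-- A vertex meeting every edge of `V` in its neighbourhood may be added; nothing is claimed about
the first generator. -/
lemma niceWith_insert [Finite σ] (hx : x ∉ V) (hcov : ∀ a ∈ V, ∀ b ∈ V, G.Adj a b → G.Adj x a ∨ G.Adj x b)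
    (hV : ∃ f, NiceWith K G V f) : ∃ f, NiceWith K G (insert x V) f := by
  obtain ⟨N, hN⟩ := exists_isNbhd G V x
  obtain ⟨f, hf, g, hg⟩ := hV
  obtain ⟨f', g', h⟩ := radGen_insert hx hN (fun a ha b hb hab =>
    (hcov a ha b hb hab).imp (fun h => (hN a).2 ⟨ha, h⟩) fun h => (hN b).2 ⟨hb, h⟩) hg
  exact ⟨f', hasPDLT_coverIdeal_insert_of_cover hx hN hcov hf, g', h⟩

/-- The first generator stays a product of variables when a new vertex adjacent to all its factors is
added. -/
lemma niceWith_insert_of_subset [Finite σ] (hx : x ∉ V)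
    (hcov : ∀ a ∈ V, ∀ b ∈ V, G.Adj a b → G.Adj x a ∨ G.Adj x b) {F : Finset σ}
    (hF : ∀ p ∈ F, p ∈ V ∧ G.Adj x p) {F' : Finset σ} (hF' : F' = F.cons x fun h => hx (hF x h).1)
    (hV : NiceWith K G V (∏ p ∈ F, X p)) :
    NiceWith K G (insert x V) (∏ p ∈ F', X p) := by
  obtain ⟨N, hN⟩ := exists_isNbhd G V x
  obtain ⟨hf, g, hg⟩ := hV
  obtain ⟨g', h⟩ := radGen_insert_of_dvd hx hN (fun a ha b hb hab =>
    (hcov a ha b hb hab).imp (fun h => (hN a).2 ⟨ha, h⟩) fun h => (hN b).2 ⟨hb, h⟩)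
    (Finset.prod_dvd_prod_of_subset F N _ fun p hp => (hN p).2 (hF p hp)) hg
  refine ⟨hasPDLT_coverIdeal_insert_of_cover hx hN hcov hf, g', ?_⟩
  rwa [hF', Finset.prod_cons]

end TwoGenerators

section LexGraph
variable {K : Type} [Field K] {n : ℕ}

/-- The graph on `Fin n` whose edge ideal is `(L(u,v))`; the vertex `p` carries the label `p + 1`. -/
def lexGraph (n : ℕ) (u v : ℕ × ℕ) : SimpleGraph (Fin n) where
  Adj p q := (p.1 + 1, q.1 + 1) ∈ lexSegSet n u v ∨ (q.1 + 1, p.1 + 1) ∈ lexSegSet n u v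
  symm := ⟨fun _ _ h => h.symm⟩
  loopless := ⟨fun p h => by rcases h with h | h <;> exact lt_irrefl _ h.1.2.1⟩

/-- Adjacency in terms of labels. For `u = x_i x_j` and `v = x_k x_l`, a label strictly between `i`
and `k` is joined to every larger label, `i` is joined to the labels at least `j`, and `k` to the
larger labels up to `l`, when `i < k`. -/
lemma lexGraph_adj {i j k l : ℕ} {p q : Fin n} : (lexGraph n (i, j) (k, l)).Adj p q ↔
    (p.1 < q.1 ∧ (i < p.1 + 1 ∨ i = p.1 + 1 ∧ j ≤ q.1 + 1) ∧
      (p.1 + 1 < k ∨ p.1 + 1 = k ∧ q.1 + 1 ≤ l)) ∨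
    (q.1 < p.1 ∧ (i < q.1 + 1 ∨ i = q.1 + 1 ∧ j ≤ p.1 + 1) ∧
      (q.1 + 1 < k ∨ q.1 + 1 = k ∧ p.1 + 1 ≤ l)) := by
  simp only [lexGraph, lexSegSet, validPair, lexGE, Set.mem_ofPred_eq]
  have := p.2
  have := q.2
  omega

lemma coverIdeal_lexGraph (u v : ℕ × ℕ) :
    coverIdeal K (lexGraph n u v) Set.univ = lexSegAlexDual K n u v := by
  have hX : ∀ p : Fin n, xv K n (p.1 + 1) = X p := fun p => by
    simp [xv]
  ext r
  rw [mem_coverIdeal, lexSegAlexDual]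
  simp only [Submodule.mem_iInf]
  constructor
  · rintro h ⟨a, b⟩ hw
    have h1 := hw.1
    simp only [validPair] at h1
    obtain ⟨a, rfl⟩ : ∃ a', a = a' + 1 := ⟨a - 1, by omega⟩
    obtain ⟨b, rfl⟩ : ∃ b', b = b' + 1 := ⟨b - 1, by omega⟩
    have := h ⟨a, by omega⟩ trivial ⟨b, by omega⟩ trivial (Or.inl hw)
    rwa [Set.image_pair, ← hX, ← hX] at this
  · rintro h p - q - hpq
    rw [Set.image_pair, ← hX, ← hX]
    rcases hpq with hpq | hpq
    · exact h (p.1 + 1, q.1 + 1) hpq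
    · rw [Set.pair_comm]; exact h (q.1 + 1, p.1 + 1) hpq

/-- The vertices with label at most `i` or greater than `a`. -/
def outer (n i a : ℕ) : Set (Fin n) := {p | p.1 + 1 ≤ i ∨ a < p.1 + 1}

/-- The vertices with labels `k - 1, …, i + 1` are added in this order; each is joined to all the
larger labels, which cover the edges present so far. -/
lemma niceWith_univ_of_outer {i j k l : ℕ}
    (h : ∃ f, NiceWith K (lexGraph n (i, j) (k, l)) (outer n i (k - 1)) f) (hik : i < k) (hkn : k ≤ n) :
    ∃ f, NiceWith K (lexGraph n (i, j) (k, l)) Set.univ f := by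
  suffices H : ∀ m, m ≤ k - 1 - i →
      ∃ f, NiceWith K (lexGraph n (i, j) (k, l)) (outer n i (k - 1 - m)) f by
    have := H (k - 1 - i) le_rfl
    rwa [show outer n i (k - 1 - (k - 1 - i)) = Set.univ by
      ext p; simp only [outer, Set.mem_ofPred_eq, Set.mem_univ, iff_true]; omega] at this
  intro m
  induction m with
  | zero => exact fun _ => h
  | succ m ih =>
    intro hm
    have hlt : k - 1 - m - 1 < n := by omega
    rw [show outer n i (k - 1 - (m + 1)) = insert ⟨k - 1 - m - 1, hlt⟩ (outer n i (k - 1 - m)) by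
      ext p; simp only [outer, Set.mem_ofPred_eq, Set.mem_insert_iff, Fin.ext_iff]; omega]
    refine niceWith_insert ?_ ?_ (ih (by omega))
    · simp only [outer, Set.mem_ofPred_eq]; omega
    · intro a ha b hb hab
      simp only [outer, Set.mem_ofPred_eq, lexGraph_adj] at *
      omega

/-- Unless `i < k`, `k + 2 ≤ j` and `l < n`, the graph is built from an independent set by adding
vertices whose neighbourhoods cover all edges. When `i < k`, the vertices `i` and `k` come first, in
an order depending on whether `j ≤ k + 1` or `l = n`. -/
lemma exists_niceWith_univ {i j k l : ℕ} (hi : 1 ≤ i) (hkl : k < l) (hln : l ≤ n)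
    (hik : i ≤ k) (hA : k = i ∨ j ≤ k + 1 ∨ l = n) :
    ∃ f, NiceWith K (lexGraph n (i, j) (k, l)) Set.univ f := by
  rcases hik.eq_or_lt with rfl | hik
  · rw [show (Set.univ : Set (Fin n)) = insert ⟨i - 1, by omega⟩ {p | p.1 + 1 ≠ i} by
      ext p; simp only [Set.mem_univ, true_iff, Set.mem_insert_iff, Set.mem_ofPred_eq, Fin.ext_iff]; omega]
    refine niceWith_insert ?_ ?_ ⟨1, niceWith_of_indep ?_⟩
    · simp only [Set.mem_ofPred_eq]; omega
    all_goals
      simp only [Set.mem_ofPred_eq, lexGraph_adj]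
      intros; omega
  · refine niceWith_univ_of_outer ?_ hik (by omega)
    rcases hA with rfl | hj | rfl
    · omega
    · rw [show outer n i (k - 1) =
        insert ⟨i - 1, by omega⟩ (insert ⟨k - 1, by omega⟩ (outer n (i - 1) k)) by
        ext p; simp only [outer, Set.mem_insert_iff, Set.mem_ofPred_eq, Fin.ext_iff]; omega]
      refine niceWith_insert ?_ ?_ (niceWith_insert ?_ ?_ ⟨1, niceWith_of_indep ?_⟩)
      all_goals
        simp only [outer, Set.mem_insert_iff, Set.mem_ofPred_eq, lexGraph_adj, Fin.ext_iff]
        try intros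
        omega
    · rw [show outer l i (k - 1) =
        insert ⟨k - 1, by omega⟩ (insert ⟨i - 1, by omega⟩ (outer l (i - 1) k)) by
        ext p; simp only [outer, Set.mem_insert_iff, Set.mem_ofPred_eq, Fin.ext_iff]; omega]
      refine niceWith_insert ?_ ?_ (niceWith_insert ?_ ?_ ⟨1, niceWith_of_indep ?_⟩)
      all_goals
        simp only [outer, Set.mem_insert_iff, Set.mem_ofPred_eq, lexGraph_adj, Fin.ext_iff]
        try intros
        omega

/-- The vertices with label less than `i` or strictly between `a` and `T`. -/
def strip (n i a T : ℕ) : Set (Fin n) := {p | p.1 + 1 < i ∨ a < p.1 + 1 ∧ p.1 + 1 < T}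

/-- The vertices with labels `a + 1, …, k`. -/
def block (n a k : ℕ) : Finset (Fin n) := {p | a < p.1 + 1 ∧ p.1 + 1 ≤ k}

/-- The first generator `∏ X` over the labels `i + 1, …, k` does not depend on `T`, which is what
`radGen_insert_three` needs. -/
lemma niceWith_strip {i j k l T : ℕ} (hik : i < k) (hkn : k < n) (hT : k < T) :
    NiceWith K (lexGraph n (i, j) (k, l)) (strip n i i T) (∏ p ∈ block n i k, X p) := by
  suffices H : ∀ m, m ≤ k - i →
      NiceWith K (lexGraph n (i, j) (k, l)) (strip n i (k - m) T) (∏ p ∈ block n (k - m) k, X p) by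
    have := H (k - i) le_rfl
    rwa [show k - (k - i) = i by omega] at this
  intro m
  induction m with
  | zero =>
    intro _
    rw [show block n (k - 0) k = ∅ by ext p; simp [block], Finset.prod_empty]
    refine niceWith_of_indep ?_
    simp only [strip, Set.mem_ofPred_eq, lexGraph_adj]
    intros; omega
  | succ m ih =>
    intro hm
    have hlt : k - m - 1 < n := by omega
    rw [show strip n i (k - (m + 1)) T = insert ⟨k - m - 1, hlt⟩ (strip n i (k - m) T) by
      ext p; simp only [strip, Set.mem_ofPred_eq, Set.mem_insert_iff, Fin.ext_iff]; omega]
    refine niceWith_insert_of_subset ?_ ?_ ?_ ?_ (ih (by omega))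
    · simp only [strip, Set.mem_ofPred_eq]; omega
    · intro a ha b hb hab
      simp only [strip, Set.mem_ofPred_eq, lexGraph_adj] at *
      omega
    · intro p hp
      simp only [strip, block, Finset.mem_filter, Finset.mem_univ, true_and, Set.mem_ofPred_eq,
        lexGraph_adj] at *
      omega
    · ext p
      simp only [block, Finset.mem_cons, Finset.mem_filter, Finset.mem_univ, true_and, Fin.ext_iff]
      omega

/-- The vertex `i` is added last. Its neighbours have labels at least `j > k`, so that the vertex sets
`V` and `V \ N` are strips with `T = n + 1` and `T = j`. -/
lemma three_generators_of_gap {i j k l : ℕ} (hi : 1 ≤ i) (hik : i < k) (hkn : k < n) (hj : k + 2 ≤ j) :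
    CategoryTheory.HasProjectiveDimensionLT (ModuleCat.of (MvPolynomial (Fin n) K)
      (coverIdeal K (lexGraph n (i, j) (k, l)) Set.univ)) 3 ∧
    ∃ f g h, RadGen (coverIdeal K (lexGraph n (i, j) (k, l)) Set.univ) {f, g, h} := by
  obtain ⟨N, hN⟩ := exists_isNbhd (lexGraph n (i, j) (k, l)) (strip n i i (n + 1)) ⟨i - 1, by omega⟩
  rw [show (Set.univ : Set (Fin n)) = insert ⟨i - 1, by omega⟩ (strip n i i (n + 1)) by
      ext p; simp only [strip, Set.mem_univ, true_iff, Set.mem_insert_iff, Set.mem_ofPred_eq, Fin.ext_iff]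
      omega]
  have hx : (⟨i - 1, by omega⟩ : Fin n) ∉ strip n i i (n + 1) := by
    simp only [strip, Set.mem_ofPred_eq]; omega
  obtain ⟨hV, g, hg⟩ := niceWith_strip (K := K) (j := j) (l := l) hik hkn (T := n + 1) (by omega)
  obtain ⟨hC, g', hg'⟩ := niceWith_strip (K := K) (n := n) (j := j) (l := l) hik hkn (T := j) (by omega)
  have hVN : strip n i i (n + 1) \ (N : Set (Fin n)) = strip n i i j := by
    ext p
    simp only [Set.mem_sdiff, Finset.mem_coe, hN p]
    simp only [strip, Set.mem_ofPred_eq, lexGraph_adj]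
    omega
  rw [← hVN] at hC hg'
  exact ⟨hasPDLT_coverIdeal_insert hx hN hC
    (CategoryTheory.hasProjectiveDimensionLT_of_ge _ 2 3 (by omega)),
    _, _, _, radGen_insert_three hx hN hg hg'⟩

end LexGraph

/-! ### The equality -/

/-- For any lexsegment edge ideal `I = (L(u,v))` of
`S = K[x_1,…,x_n]` with Alexander dual `I*`, the arithmetical rank of `I*`
equals the projective dimension of `S/I*` over `S`. -/
theorem lexSegAlexDual_ara_eq_projDim (K : Type) [Field K] (n : ℕ) (u v : ℕ × ℕ)
    (hu : validPair n u) (hv : validPair n v) (huv : lexGE u v) :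
    ara (lexSegAlexDual K n u v) =
      projDim (ModuleCat.of (MvPolynomial (Fin n) K)
        (MvPolynomial (Fin n) K ⧸ lexSegAlexDual K n u v)) := by
  obtain ⟨i, j⟩ := u
  obtain ⟨k, l⟩ := v
  simp only [validPair] at hu hv
  simp only [lexGE] at huv
  rw [← coverIdeal_lexGraph]
  by_cases hA : k = i ∨ j ≤ k + 1 ∨ l = n
  · obtain ⟨f, hpd, g, hg⟩ := exists_niceWith_univ (K := K) (n := n) (j := j) hu.1 hv.2.1 hv.2.2
      (by omega) hA
    have hrange : Set.range ![f, g] = {f, g} := by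
      rw [Matrix.range_cons, Matrix.range_cons, Matrix.range_empty, Set.union_empty]
      rfl
    refine ara_eq_projDim_of (Or.inl rfl) (fun I N hI hN => ?_) hpd ⟨![f, g], hrange ▸ hg⟩
    -- `u` itself is an edge
    refine not_hasPDLT_two (a := ⟨i - 1, by omega⟩) (b := ⟨j - 1, by omega⟩) ?_ hI hN
    rw [lexGraph_adj]
    dsimp only
    omega
  · obtain ⟨hpd, f, g, h, hr⟩ := three_generators_of_gap (K := K) (n := n) (i := i) (j := j) (k := k)
      (l := l) hu.1 (by omega) (by omega) (by omega)
    have hrange : Set.range ![f, g, h] = {f, g, h} := by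
      rw [Matrix.range_cons, Matrix.range_cons, Matrix.range_cons, Matrix.range_empty, Set.union_empty]
      rfl
    refine ara_eq_projDim_of (Or.inr rfl) (fun I N hI hN => ?_) hpd ⟨![f, g, h], hrange ▸ hr⟩
    -- the edges `{i, n}` and `{k, k + 1}` form an induced pair of disjoint edges
    refine not_hasPDLT_three (a := ⟨i - 1, by omega⟩) (b := ⟨n - 1, by omega⟩)
      (c := ⟨k - 1, by omega⟩) (d := ⟨k, by omega⟩) ?_ ?_ ?_ ?_ ?_ ?_ ?_ ?_ ?_ ?_ hI hN
    all_goals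
      first
        | rw [lexGraph_adj]; dsimp only; omega
        | simp only [ne_eq, Fin.ext_iff]; omega
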